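/- arXiv:2308.07589 — 9 statements merged into one kernel-verified Lean document; each statement's English description precedes it below -/
import Mathlib

section
/- Let F be a complex Hilbert space and let E1, E2 be bounded linear operators on F. Then there exist an orthogonal projection P on F and a unitary operator U on F such that E1 = U*(I − P) and E2 = PU if and only if E1 E2 = E2 E1 = 0 and E1* E1 + E2 E2* = I = E1 E1* + E2* E2. (In particular, under these conditions E1 and E2 are partial isometries.) -/
/-!
The statement is an identity in the star ring of bounded operators. Given the relations on
`E1`, `E2`, take `P = E2 E2*` and `U = E1* + E2`. In `U*U` and `UU*` the cross terms are
`E1 E2`, `E2 E1` and their adjoints, so they vanish and the two sum relations make `U` unitary.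
Multiplying `E1*E1 + E2 E2* = 1` by `E2` on the right and by `E1` on the left gives
`E2 E2* E2 = E2` and `E1 E1* E1 = E1` (`E1` and `E2` are partial isometries), from which `P² = P`,
`PU = E2` and `U*(1 - P) = E1` follow. The converse is a direct computation.
-/

open ContinuousLinearMap

theorem relations_of_projection_unitary {R : Type*} [Ring R] [StarRing R] {p u : R}
    (hp : star p = p) (hpp : p * p = p) (h1 : star u * u = 1) (h2 : u * star u = 1) :
    (star u * (1 - p)) * (p * u) = 0 ∧ (p * u) * (star u * (1 - p)) = 0 ∧
      star (star u * (1 - p)) * (star u * (1 - p)) + (p * u) * star (p * u) = 1 ∧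
      (star u * (1 - p)) * star (star u * (1 - p)) + star (p * u) * (p * u) = 1 := by
  have hq : (1 - p) * p = 0 := by rw [sub_mul, hpp, one_mul, sub_self]
  have hq' : p * (1 - p) = 0 := by rw [mul_sub, hpp, mul_one, sub_self]
  have hqq : (1 - p) * (1 - p) = 1 - p := by rw [mul_sub, hq, mul_one, sub_zero]
  simp only [star_mul, star_sub, star_one, star_star, hp]
  refine ⟨?_, ?_, ?_, ?_⟩
  · calc _ = star u * ((1 - p) * p) * u := by noncomm_ring
      _ = 0 := by rw [hq, mul_zero, zero_mul]
  · calc _ = p * (u * star u) * (1 - p) := by simp only [mul_assoc]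
      _ = 0 := by rw [h2, mul_one, hq']
  · calc _ = (1 - p) * (u * star u) * (1 - p) + p * (u * star u) * p := by
          simp only [mul_assoc]
      _ = 1 := by rw [h2, mul_one, mul_one, hqq, hpp, sub_add_cancel]
  · calc _ = star u * ((1 - p) * (1 - p) + p * p) * u := by
          simp only [mul_assoc, mul_add, add_mul]
      _ = 1 := by rw [hqq, hpp, sub_add_cancel, mul_one, h1]

theorem projection_unitary_of_relations {R : Type*} [Ring R] [StarRing R] {a b : R}
    (hab : a * b = 0) (hba : b * a = 0) (h1 : star a * a + b * star b = 1)
    (h2 : a * star a + star b * b = 1) :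
    ∃ p u : R, star p = p ∧ p * p = p ∧ star u * u = 1 ∧ u * star u = 1 ∧
      a = star u * (1 - p) ∧ b = p * u := by
  have hab' : star b * star a = 0 := by rw [← star_mul, hab, star_zero]
  have hba' : star a * star b = 0 := by rw [← star_mul, hba, star_zero]
  have hb : b * star b * b = b := by
    have h := congrArg (· * b) h1
    simpa [add_mul, mul_assoc, hab] using h
  have ha : a * (star a * a) = a := by
    have h := congrArg (a * ·) h1
    simpa [mul_add, ← mul_assoc, hab] using h
  refine ⟨b * star b, star a + b, by simp, ?_, ?_, ?_, ?_, ?_⟩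
  · rw [← mul_assoc, hb]
  · simp only [star_add, star_star, add_mul, mul_add, hab, hab', add_zero, zero_add, h2]
  · simp only [star_add, star_star, add_mul, mul_add, hba, hba', add_zero, zero_add, h1]
  · rw [← h1, add_sub_cancel_right, star_add, star_star, add_mul, ha, ← mul_assoc (star b),
      hab', zero_mul, add_zero]
  · rw [mul_add, hb, mul_assoc, hab', mul_zero, zero_add]

theorem stmt_0 {F : Type*} [NormedAddCommGroup F] [InnerProductSpace ℂ F] [CompleteSpace F]
    (E1 E2 : F →L[ℂ] F) :
    (∃ P U : F →L[ℂ] F,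
        adjoint P = P ∧ P ∘L P = P ∧
        adjoint U ∘L U = 1 ∧ U ∘L adjoint U = 1 ∧
        E1 = adjoint U ∘L (1 - P) ∧ E2 = P ∘L U) ↔
      (E1 ∘L E2 = 0 ∧ E2 ∘L E1 = 0 ∧
        adjoint E1 ∘L E1 + E2 ∘L adjoint E2 = 1 ∧
        E1 ∘L adjoint E1 + adjoint E2 ∘L E2 = 1) := by
  constructor
  · rintro ⟨P, U, hP, hPP, h1, h2, rfl, rfl⟩
    exact relations_of_projection_unitary (R := F →L[ℂ] F) hP hPP h1 h2
  · rintro ⟨hab, hba, h1, h2⟩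
    exact projection_unitary_of_relations (R := F →L[ℂ] F) hab hba h1 h2
end

section
/- Let (V1, V2) be a pair of commuting isometries on a complex Hilbert space H. Then there exist complex Hilbert spaces F and Ku, an orthogonal projection P and a unitary U on F, a pair of commuting unitaries (W1, W2) on Ku, and a unitary operator τ from H onto the Hilbert direct sum ℓ²(ℕ,F) ⊕ Ku, such that τ ∘ V1 = (M_{U*(I−P) + z U*P} ⊕ W1) ∘ τ and τ ∘ V2 = (M_{PU + z (I−P)U} ⊕ W2) ∘ τ. (Berger–Coburn–Lebow model, BCL2 form.) -/
/-! Write `A = V1`, `B = V2`, `V = A B`, and let `F = ker V*` be the wandering space of the isometry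
`V`.  The isometry `S : ℓ²(ℕ, F) → H`, `f ↦ ∑ Vⁿ f n`, has adjoint `T` with coordinates
`(T x) n = (1 - V V*) V*ⁿ x` (`exists_wold`), and `H` splits as `ran S ⊕ ker T`, which gives
`τ x = (T x, x - S T x)` (`exists_decomp`).

On `H` put `P = B (1 - A A*) B*` and `U = (1 - B B*) A* + B (1 - A A*)`.  Both operators and their
adjoints leave `F` invariant; there `P` is an orthogonal projection, and
`U U* = U* U = 1 - V V*` on `H`, so `U` is unitary on `F`.  The intertwining relations reduce to
operator identities such as
`(1 - V V*) B* = U* (1 - P) (1 - V V*) V* + U* P (1 - V V*)`,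
applied to `V*ⁿ x`, because `V*ⁿ⁺¹ A = V*ⁿ B*` and `V*ⁿ⁺¹ B = V*ⁿ A*`.
These identities also show that `ker T` is invariant under `A`, `B` and their adjoints, and a vector
fixed by `V V*` lies in the ranges of `A` and `B`, so both restrict to unitaries on `ker T`. -/

open ContinuousLinearMap

universe u

set_option linter.unusedSimpArgs false

section helpers

variable {H : Type u} [NormedAddCommGroup H] [InnerProductSpace ℂ H]

/-- The restriction of a bounded operator to an invariant subspace. -/
noncomputable def restr (K : Submodule ℂ H) (T : H →L[ℂ] H) (h : ∀ x ∈ K, T x ∈ K) : K →L[ℂ] K :=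
  (T ∘L K.subtypeL).codRestrict K (fun x => h x x.2)

@[simp] lemma coe_restr (K : Submodule ℂ H) (T : H →L[ℂ] H) (h : ∀ x ∈ K, T x ∈ K) (x : K) :
    ((restr K T h x : K) : H) = T x := rfl

lemma adjoint_restr [CompleteSpace H] (K : Submodule ℂ H) [CompleteSpace K] (T T' : H →L[ℂ] H)
    (h : ∀ x ∈ K, T x ∈ K) (h' : ∀ x ∈ K, T' x ∈ K) (e : adjoint T = T') :
    adjoint (restr K T h) = restr K T' h' := by
  symm
  rw [eq_adjoint_iff]
  intro x y
  simp only [Submodule.coe_inner, coe_restr, ← e, adjoint_inner_left]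

lemma adjoint_apply_of_isometry [CompleteSpace H] (V : H →L[ℂ] H) (h : ∀ x, ‖V x‖ = ‖x‖) (x : H) :
    adjoint V (V x) = x := by
  have := (norm_map_iff_adjoint_comp_self V).1 h
  exact DFunLike.congr_fun this x

lemma norm_pow_apply (V : H →L[ℂ] H) (h : ∀ x, ‖V x‖ = ‖x‖) (n : ℕ) (x : H) :
    ‖(V ^ n) x‖ = ‖x‖ := by
  induction n with
  | zero => simp
  | succ n ih => rw [pow_succ']; simpa [h] using ih

/-- The isometry `f ↦ ∑ Vⁿ f n` from `ℓ²` of the wandering space `F = ker V*`, described through the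
coordinates of its adjoint. -/
lemma exists_wold [CompleteSpace H] (V : H →L[ℂ] H) (h : ∀ x, ‖V x‖ = ‖x‖)
    (F : Submodule ℂ H) [CompleteSpace F]
    (hF : ∀ x, x ∈ F ↔ adjoint V x = 0) :
    ∃ S : lp (fun _ : ℕ => F) 2 →ₗᵢ[ℂ] H, ∀ x n,
      ((adjoint S.toContinuousLinearMap x n : F) : H) =
        ((adjoint V) ^ n) x - V (adjoint V (((adjoint V) ^ n) x)) := by
  have hVV := adjoint_apply_of_isometry V h
  let J : ℕ → F →ₗᵢ[ℂ] H := fun n =>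
    { toLinearMap := ((V ^ n) ∘L F.subtypeL).toLinearMap
      norm_map' := fun x => norm_pow_apply V h n x }
  have hJ : ∀ n (x : F), J n x = (V ^ n) x := fun n x => rfl
  have hadj : ∀ n, adjoint (V ^ n) = (adjoint V) ^ n := fun n => by
    simp only [← star_eq_adjoint, star_pow]
  have key : ∀ (n k : ℕ) (x y : F), inner ℂ ((V ^ n) (x : H)) ((V ^ (n + k + 1)) (y : H)) = 0 := by
    intro n k x y
    induction n with
    | zero =>
      rw [pow_zero, zero_add, pow_succ']
      simp only [mul_apply_eq_comp, one_apply_eq_self]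
      rw [← adjoint_inner_left, (hF _).1 x.2, inner_zero_left]
    | succ n ih =>
      rw [show n + 1 + k + 1 = (n + k + 1) + 1 by ring, pow_succ', pow_succ' V (n + k + 1)]
      simp only [mul_apply_eq_comp]
      rw [← adjoint_inner_left, hVV, ih]
  have hO : OrthogonalFamily ℂ (fun _ : ℕ => F) J := by
    intro i j hij x y
    rw [hJ, hJ]
    rcases lt_or_gt_of_ne hij with hl | hl
    · obtain ⟨k, rfl⟩ := Nat.exists_eq_add_of_lt hl
      exact key i k x y
    · obtain ⟨k, rfl⟩ := Nat.exists_eq_add_of_lt hl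
      rw [inner_eq_zero_symm]
      exact key j k y x
  refine ⟨hO.linearIsometry, fun x n => ?_⟩
  have hmem : ((adjoint V) ^ n) x - V (adjoint V (((adjoint V) ^ n) x)) ∈ F := by
    rw [hF, map_sub, hVV, sub_self]
  suffices e : adjoint hO.linearIsometry.toContinuousLinearMap x n = ⟨_, hmem⟩ by rw [e]
  refine ext_inner_left ℂ fun g => ?_
  have e1 : inner ℂ g (adjoint hO.linearIsometry.toContinuousLinearMap x n) =
      inner ℂ (lp.single 2 n g : lp (fun _ : ℕ => F) 2)
        (adjoint hO.linearIsometry.toContinuousLinearMap x) :=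
    (lp.inner_single_left (𝕜 := ℂ) (G := fun _ : ℕ => F) n g _).symm
  rw [e1, adjoint_inner_right]
  have e2 : hO.linearIsometry.toContinuousLinearMap (lp.single 2 n g) = (V ^ n) (g : H) :=
    hO.linearIsometry_apply_single g
  rw [e2, Submodule.coe_inner, inner_sub_right, ← adjoint_inner_left V, (hF _).1 g.2,
    inner_zero_left, sub_zero, ← hadj, adjoint_inner_right]

/-- An isometry `S : E → H` splits `H` orthogonally as `E ⊕ ker S*`. -/
lemma exists_decomp [CompleteSpace H] {E : Type u} [NormedAddCommGroup E]
    [InnerProductSpace ℂ E] [CompleteSpace E]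
    (S : E →ₗᵢ[ℂ] H) (K : Submodule ℂ H)
    (hK : ∀ x, x ∈ K ↔ adjoint S.toContinuousLinearMap x = 0) :
    ∃ τ : H ≃ₗᵢ[ℂ] WithLp 2 (E × K), ∀ x,
      (τ x).fst = adjoint S.toContinuousLinearMap x ∧
      (((τ x).snd : K) : H) = x - S (adjoint S.toContinuousLinearMap x) := by
  set T := adjoint S.toContinuousLinearMap with hT
  have hTS : ∀ f, T (S f) = f := fun f => by
    have := (norm_map_iff_adjoint_comp_self S.toContinuousLinearMap).1 S.norm_map
    exact DFunLike.congr_fun this f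
  have hmem : ∀ x, x - S (T x) ∈ K := fun x => by rw [hK, map_sub, hTS, sub_self]
  let e : H ≃ₗ[ℂ] WithLp 2 (E × K) :=
    { toFun := fun x => WithLp.toLp 2 (T x, ⟨x - S (T x), hmem x⟩)
      invFun := fun p => S p.fst + p.snd
      map_add' := fun x y => by
        apply WithLp.ofLp_injective
        refine Prod.ext ?_ (Subtype.ext ?_)
        · simp
        · simp; abel
      map_smul' := fun c x => by
        apply WithLp.ofLp_injective
        refine Prod.ext ?_ (Subtype.ext ?_)
        · simp
        · simp [smul_sub]
      left_inv := fun x => by simp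
      right_inv := fun p => by
        have h0 : T (p.snd : H) = 0 := (hK _).1 p.snd.2
        apply WithLp.ofLp_injective
        refine Prod.ext ?_ (Subtype.ext ?_)
        · simp [hTS, h0]
        · simp [hTS, h0] }
  refine ⟨⟨e, fun x => ?_⟩, fun x => ⟨rfl, rfl⟩⟩
  have h0 : inner ℂ (S (T x)) (x - S (T x)) = 0 := by
    have : inner ℂ (S.toContinuousLinearMap (T x)) (x - S (T x)) = 0 := by
      rw [← adjoint_inner_right, ← hT, (hK _).1 (hmem x), inner_zero_right]
    exact this
  have h3 := norm_add_sq_eq_norm_sq_add_norm_sq_of_inner_eq_zero _ _ h0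
  rw [add_sub_cancel, S.norm_map] at h3
  have h4 : ‖e x‖ ^ 2 = ‖T x‖ ^ 2 + ‖x - S (T x)‖ ^ 2 := WithLp.prod_norm_sq_eq_of_L2 (e x)
  have : ‖e x‖ ^ 2 = ‖x‖ ^ 2 := by rw [h4]; linarith
  exact (sq_eq_sq₀ (norm_nonneg _) (norm_nonneg _)).1 this

end helpers

set_option maxHeartbeats 2000000 in
theorem stmt_2 {H : Type u} [NormedAddCommGroup H] [InnerProductSpace ℂ H] [CompleteSpace H]
    (V1 V2 : H →L[ℂ] H)
    (h1 : ∀ x, ‖V1 x‖ = ‖x‖) (h2 : ∀ x, ‖V2 x‖ = ‖x‖)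
    (hc : V1 ∘L V2 = V2 ∘L V1) :
    ∃ (F : Type u) (_ : NormedAddCommGroup F) (_ : InnerProductSpace ℂ F)
      (_ : CompleteSpace F)
      (Ku : Type u) (_ : NormedAddCommGroup Ku) (_ : InnerProductSpace ℂ Ku)
      (_ : CompleteSpace Ku)
      (P U : F →L[ℂ] F) (W1 W2 : Ku →L[ℂ] Ku)
      (M1 M2 : lp (fun _ : ℕ => F) 2 →L[ℂ] lp (fun _ : ℕ => F) 2)
      (τ : H ≃ₗᵢ[ℂ] WithLp 2 (lp (fun _ : ℕ => F) 2 × Ku)),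
      adjoint P = P ∧ P ∘L P = P ∧
      adjoint U ∘L U = 1 ∧ U ∘L adjoint U = 1 ∧
      adjoint W1 ∘L W1 = 1 ∧ W1 ∘L adjoint W1 = 1 ∧
      adjoint W2 ∘L W2 = 1 ∧ W2 ∘L adjoint W2 = 1 ∧
      W1 ∘L W2 = W2 ∘L W1 ∧
      (∀ f : lp (fun _ : ℕ => F) 2,
        (M1 f) 0 = (adjoint U ∘L (1 - P)) (f 0) ∧
        ∀ n : ℕ, (M1 f) (n + 1) =
          (adjoint U ∘L (1 - P)) (f (n + 1)) + (adjoint U ∘L P) (f n)) ∧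
      (∀ f : lp (fun _ : ℕ => F) 2,
        (M2 f) 0 = (P ∘L U) (f 0) ∧
        ∀ n : ℕ, (M2 f) (n + 1) = (P ∘L U) (f (n + 1)) + ((1 - P) ∘L U) (f n)) ∧
      (∀ x : H,
        (WithLp.equiv 2 (lp (fun _ : ℕ => F) 2 × Ku) (τ (V1 x))).1 =
          M1 (WithLp.equiv 2 (lp (fun _ : ℕ => F) 2 × Ku) (τ x)).1 ∧
        (WithLp.equiv 2 (lp (fun _ : ℕ => F) 2 × Ku) (τ (V1 x))).2 =
          W1 (WithLp.equiv 2 (lp (fun _ : ℕ => F) 2 × Ku) (τ x)).2) ∧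
      (∀ x : H,
        (WithLp.equiv 2 (lp (fun _ : ℕ => F) 2 × Ku) (τ (V2 x))).1 =
          M2 (WithLp.equiv 2 (lp (fun _ : ℕ => F) 2 × Ku) (τ x)).1 ∧
        (WithLp.equiv 2 (lp (fun _ : ℕ => F) 2 × Ku) (τ (V2 x))).2 =
          W2 (WithLp.equiv 2 (lp (fun _ : ℕ => F) 2 × Ku) (τ x)).2) := by
  set C := adjoint V1 with hC
  set D := adjoint V2 with hD
  have hC' : adjoint C = V1 := by rw [hC, adjoint_adjoint]
  have hD' : adjoint D = V2 := by rw [hD, adjoint_adjoint]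
  -- Rewriting rules bringing words in `V1, V2, C, D` to a normal form.
  have ca : ∀ x, C (V1 x) = x := adjoint_apply_of_isometry V1 h1
  have db : ∀ x, D (V2 x) = x := adjoint_apply_of_isometry V2 h2
  have ab : ∀ x, V1 (V2 x) = V2 (V1 x) := fun x => DFunLike.congr_fun hc x
  have cd : ∀ x, C (D x) = D (C x) := fun x => by
    have := congrArg adjoint hc
    rw [adjoint_comp, adjoint_comp] at this
    exact (DFunLike.congr_fun this x).symm
  have cba : ∀ x, C (V2 (V1 x)) = V2 x := fun x => by rw [← ab, ca]
  have dcb : ∀ x, D (C (V2 x)) = C x := fun x => by rw [← cd, db]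
  let V : H →L[ℂ] H := V1 ∘L V2
  have hV : ∀ x, V x = V2 (V1 x) := ab
  have hVn : ∀ x, ‖V x‖ = ‖x‖ := fun x => by rw [hV, h2, h1]
  have hVs : adjoint V = D ∘L C := by simp only [V, adjoint_comp, hC, hD]
  have hVs' : ∀ x, adjoint V x = D (C x) := fun x => by rw [hVs]; rfl
  let F : Submodule ℂ H := LinearMap.ker (adjoint V).toLinearMap
  have hF : ∀ x, x ∈ F ↔ adjoint V x = 0 := fun x => Iff.rfl
  have hFc : IsClosed (F : Set H) := (adjoint V).isClosed_ker
  have : CompleteSpace F := hFc.completeSpace_coe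
  obtain ⟨S, hS⟩ := exists_wold V hVn F hF
  set T := adjoint S.toContinuousLinearMap with hT
  have hTS : ∀ f, T (S f) = f := fun f => by
    have := (norm_map_iff_adjoint_comp_self S.toContinuousLinearMap).1 S.norm_map
    exact DFunLike.congr_fun this f
  let K : Submodule ℂ H := LinearMap.ker T.toLinearMap
  have hK : ∀ x, x ∈ K ↔ T x = 0 := fun x => Iff.rfl
  have hKc : IsClosed (K : Set H) := T.isClosed_ker
  have : CompleteSpace K := hKc.completeSpace_coe
  obtain ⟨τ, hτ⟩ := exists_decomp S K hK
  let P₀ : H →L[ℂ] H := V2 ∘L (1 - V1 ∘L C) ∘L D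
  let U₀ : H →L[ℂ] H := (1 - V2 ∘L D) ∘L C + V2 ∘L (1 - V1 ∘L C)
  let U₁ : H →L[ℂ] H := V1 ∘L (1 - V2 ∘L D) + (1 - V1 ∘L C) ∘L D
  have hP₀ : ∀ x, P₀ x = V2 (D x - V1 (C (D x))) := fun x => rfl
  have hU₀ : ∀ x, U₀ x = C x - V2 (D (C x)) + V2 (x - V1 (C x)) := fun x => rfl
  have hU₁ : ∀ x, U₁ x = V1 (x - V2 (D x)) + (D x - V1 (C (D x))) := fun x => rfl
  have a1 : adjoint (1 : H →L[ℂ] H) = 1 := by rw [← star_eq_adjoint, star_one]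
  have aP₀ : adjoint P₀ = P₀ := by
    simp only [P₀, adjoint_comp, map_sub, a1, hC', hD', ← hC, ← hD]
    rfl
  have aU₀ : adjoint U₀ = U₁ := by
    simp only [U₀, U₁, adjoint_comp, map_sub, map_add, a1, hC', hD', ← hC, ← hD]
  have hUUs : ∀ x, D (C x) = 0 → U₀ (U₁ x) = x := fun x hx => by
    simp only [hU₀, hU₁, map_sub, map_add, ca, db, ab, cd, cba, dcb, hx, map_zero]
    abel
  have hUsU : ∀ x, D (C x) = 0 → U₁ (U₀ x) = x := fun x hx => by
    simp only [hU₀, hU₁, map_sub, map_add, ca, db, ab, cd, cba, dcb, hx, map_zero]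
    abel
  have mP : ∀ x ∈ F, P₀ x ∈ F := fun x _ => by
    rw [hF, hVs', hP₀]; simp [ca, db, ab, cd, cba, dcb]
  have mU : ∀ x ∈ F, U₀ x ∈ F := fun x _ => by
    rw [hF, hVs', hU₀]; simp [ca, db, ab, cd, cba, dcb]
  have mU' : ∀ x ∈ F, U₁ x ∈ F := fun x _ => by
    rw [hF, hVs', hU₁]; simp [ca, db, ab, cd, cba, dcb]
  have zF : ∀ x : F, D (C (x : H)) = 0 := fun x => by rw [← hVs']; exact (hF _).1 x.2
  have aU := adjoint_restr F U₀ U₁ mU mU' aU₀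
  have hCp : ∀ n x, C ((adjoint V ^ n) x) = (adjoint V ^ n) (C x) := fun n x => by
    have : Commute C (adjoint V) := by
      ext y; simp [hVs', cd]
    exact DFunLike.congr_fun (this.pow_right n) x
  have hDp : ∀ n x, D ((adjoint V ^ n) x) = (adjoint V ^ n) (D x) := fun n x => by
    have : Commute D (adjoint V) := by
      ext y; simp [hVs', cd]
    exact DFunLike.congr_fun (this.pow_right n) x
  have hS' : ∀ x n, ((T x n : F) : H) =
      (adjoint V ^ n) x - V2 (V1 (D (C ((adjoint V ^ n) x)))) := fun x n => by
    rw [hS, hV, hVs']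
  have pA : ∀ x n, (adjoint V ^ (n + 1)) (V1 x) = D ((adjoint V ^ n) x) := fun x n => by
    rw [pow_succ, mul_apply_eq_comp, hVs', ca, hDp]
  have pB : ∀ x n, (adjoint V ^ (n + 1)) (V2 x) = C ((adjoint V ^ n) x) := fun x n => by
    rw [pow_succ, mul_apply_eq_comp, hVs', dcb, hCp]
  have p1 : ∀ x n, (adjoint V ^ (n + 1)) x = D (C ((adjoint V ^ n) x)) := fun x n => by
    rw [pow_succ', mul_apply_eq_comp, hVs']
  let P := restr F P₀ mP
  let U := restr F U₀ mU
  let U' := restr F U₁ mU'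
  have A0 : ∀ x, T (V1 x) 0 = (U' ∘L (1 - P)) (T x 0) := fun x => by
    apply Subtype.ext
    simp [P, U', hS', hP₀, hU₁, ca, db, ab, cd, cba, dcb]
  have An : ∀ x n, T (V1 x) (n + 1) = (U' ∘L (1 - P)) (T x (n + 1)) + (U' ∘L P) (T x n) :=
    fun x n => by
      apply Subtype.ext
      simp only [hS', pA, p1, P, U', comp_apply, sub_apply, one_apply_eq_self, Submodule.coe_add,
        Submodule.coe_sub, coe_restr, hP₀, hU₁, map_sub, map_add, ca, db, ab, cd, cba, dcb]
      abel
  have B0 : ∀ x, T (V2 x) 0 = (P ∘L U) (T x 0) := fun x => by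
    apply Subtype.ext
    simp [P, U, hS', hP₀, hU₀, ca, db, ab, cd, cba, dcb]
  have Bn : ∀ x n, T (V2 x) (n + 1) = (P ∘L U) (T x (n + 1)) + ((1 - P) ∘L U) (T x n) :=
    fun x n => by
      apply Subtype.ext
      simp only [hS', pB, p1, P, U, comp_apply, sub_apply, one_apply_eq_self, Submodule.coe_add,
        Submodule.coe_sub, coe_restr, hP₀, hU₀, map_sub, map_add, ca, db, ab, cd, cba, dcb]
      abel
  have kA : ∀ x ∈ K, V1 x ∈ K := fun x hx => by
    rw [hK] at hx ⊢
    ext n : 2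
    cases n with
    | zero => rw [A0, hx]; simp
    | succ n => rw [An, hx]; simp
  have kB : ∀ x ∈ K, V2 x ∈ K := fun x hx => by
    rw [hK] at hx ⊢
    ext n : 2
    cases n with
    | zero => rw [B0, hx]; simp
    | succ n => rw [Bn, hx]; simp
  -- `T (C x)` is the backward shift of `T (V2 x)`, and symmetrically.
  have kC : ∀ x ∈ K, C x ∈ K := fun x hx => by
    have hb := (hK _).1 (kB x hx)
    rw [hK]
    ext n : 2
    have : T (C x) n = T (V2 x) (n + 1) := Subtype.ext (by simp only [hS', pB, hCp])
    rw [this, hb]; simp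
  have kD : ∀ x ∈ K, D x ∈ K := fun x hx => by
    have hb := (hK _).1 (kA x hx)
    rw [hK]
    ext n : 2
    have : T (D x) n = T (V1 x) (n + 1) := Subtype.ext (by rw [hS', hS', pA, hDp])
    rw [this, hb]; simp
  have fixK : ∀ x ∈ K, x = V2 (V1 (D (C x))) := fun x hx => by
    have h := hS' x 0
    rw [(hK _).1 hx] at h
    have h' : 0 = x - V2 (V1 (D (C x))) := by simpa using h
    exact sub_eq_zero.1 h'.symm
  have ac : ∀ x ∈ K, V1 (C x) = x := fun x hx => by
    rw [fixK x hx, cba, ab]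
  have bd : ∀ x ∈ K, V2 (D x) = x := fun x hx => by
    rw [fixK x hx, db]
  have aW1 := adjoint_restr K V1 C kA kC rfl
  have aW2 := adjoint_restr K V2 D kB kD rfl
  let Sc := S.toContinuousLinearMap
  have hST : ∀ x, T (x - S (T x)) = 0 := fun x => by rw [map_sub, hTS, sub_self]
  have iA : ∀ x, T (V1 x) = T (V1 (S (T x))) := fun x => by
    have := (hK _).1 (kA _ ((hK _).2 (hST x)))
    rwa [map_sub, map_sub, sub_eq_zero] at this
  have iB : ∀ x, T (V2 x) = T (V2 (S (T x))) := fun x => by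
    have := (hK _).1 (kB _ ((hK _).2 (hST x)))
    rwa [map_sub, map_sub, sub_eq_zero] at this
  -- `V1` and `V2` also preserve the range of `S`, since their adjoints preserve its complement `K`.
  have red : ∀ X Y : H →L[ℂ] H, adjoint X = Y → (∀ x ∈ K, Y x ∈ K) → ∀ f,
      X (S f) = S (T (X (S f))) := by
    intro X Y hXY hY f
    rw [← sub_eq_zero, ← inner_self_eq_zero (𝕜 := ℂ)]
    set k := X (S f) - S (T (X (S f))) with hk
    have kK : k ∈ K := (hK _).2 (hST _)
    have perp : ∀ y ∈ K, ∀ g, inner ℂ y (S g) = 0 := fun y hy g => by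
      have : inner ℂ y (S.toContinuousLinearMap g) = 0 := by
        rw [← adjoint_inner_left, ← hT, (hK _).1 hy, inner_zero_left]
      exact this
    have e : inner ℂ k k = inner ℂ k (X (S f)) - inner ℂ k (S (T (X (S f)))) := by
      rw [← inner_sub_right]
    rw [e, perp k kK, ← adjoint_inner_left, hXY, perp _ (hY k kK), sub_zero]
  have sndA : ∀ x, V1 x - S (T (V1 x)) = V1 (x - S (T x)) := fun x => by
    rw [iA, ← red V1 C rfl kC, map_sub]
  have sndB : ∀ x, V2 x - S (T (V2 x)) = V2 (x - S (T x)) := fun x => by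
    rw [iB, ← red V2 D rfl kD, map_sub]
  refine ⟨F, inferInstance, inferInstance, inferInstance, K, inferInstance, inferInstance,
    inferInstance, P, U, restr K V1 kA, restr K V2 kB, T ∘L V1 ∘L Sc, T ∘L V2 ∘L Sc, τ,
    adjoint_restr F P₀ P₀ mP mP aP₀, ?_, ?_, ?_, ?_, ?_, ?_, ?_, ?_, ?_, ?_, ?_, ?_⟩
  · ext x
    simp [P, hP₀, ca, db, ab, cd, cba, dcb]
  · rw [aU]
    exact ContinuousLinearMap.ext fun x => Subtype.ext (hUsU x (zF x))
  · rw [aU]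
    exact ContinuousLinearMap.ext fun x => Subtype.ext (hUUs x (zF x))
  · rw [aW1]; ext x; simp [ca]
  · rw [aW1]; ext x; simp [ac]
  · rw [aW2]; ext x; simp [db]
  · rw [aW2]; ext x; simp [bd]
  · ext x; simp [ab]
  · intro f
    have e : T (S f) = f := hTS f
    rw [aU]
    refine ⟨?_, fun n => ?_⟩
    · have := A0 (S f); rw [e] at this; exact this
    · have := An (S f) n; rw [e] at this; exact this
  · intro f
    have e : T (S f) = f := hTS f
    refine ⟨?_, fun n => ?_⟩
    · have := B0 (S f); rw [e] at this; exact this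
    · have := Bn (S f) n; rw [e] at this; exact this
  · intro x
    refine ⟨?_, Subtype.ext ?_⟩
    · exact (hτ (V1 x)).1.trans ((iA x).trans (congrArg (fun y => T (V1 (S y))) (hτ x).1.symm))
    · exact (hτ (V1 x)).2.trans ((sndA x).trans (congrArg V1 (hτ x).2.symm))
  · intro x
    refine ⟨?_, Subtype.ext ?_⟩
    · exact (hτ (V2 x)).1.trans ((iB x).trans (congrArg (fun y => T (V2 (S y))) (hτ x).1.symm))
    · exact (hτ (V2 x)).2.trans ((sndB x).trans (congrArg V2 (hτ x).2.symm))
end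

section
/- Let (V1, V2) be a pair of commuting isometries on a complex Hilbert space H and set V = V1 V2. Write D_{A*} = I − A A* for an isometry A. Then: (i) I − V V* = D_{V1*} + V1 D_{V2*} V1* = D_{V2*} + V2 D_{V1*} V2*, and each of the operators D_{V1*}, V1 D_{V2*} V1*, D_{V2*}, V2 D_{V1*} V2* is an orthogonal projection whose range is contained in range(I − V V*); moreover D_{V1*}·(V1 D_{V2*} V1*) = 0 and D_{V2*}·(V2 D_{V1*} V2*) = 0, so the two sums are orthogonal decompositions of I − V V*. (ii) The operators U := V1 D_{V2*} + D_{V1*} V2* and U_* := D_{V2*} V1* + V2 D_{V1*} satisfy U* U = U U* = I − V V* and U_*^* U_* = U_* U_*^* = I − V V*; in particular U and U_* restrict to unitary operators on the subspace range(I − V V*). -/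
/-!
Everything except the range inclusions is an identity in the star ring `H →L[ℂ] H`, so the lemmas
are stated for elements `a`, `b` of an arbitrary star ring with `star a * a = 1` and
`star b * b = 1`. The defect `p = 1 - a * star a` is a projection with `p * a = 0` and
`star a * p = 0`. Expanding `1 - (a b) (a b)⋆` by telescoping gives the first
decomposition, and commutativity `a b = b a` gives the second. With
`U = a (1 - b b⋆) + (1 - a a⋆) b⋆`, the cross terms of `U⋆ U` and `U U⋆` vanish and what remains is
the second, respectively the first, decomposition. The operator `U_*` is `U⋆`, so
its two identities are those of `U`, exchanged. Finally, each summand `X` of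
`D = 1 - V V⋆` satisfies `D X = X`, hence has range inside that of `D`.
-/

section StarRing

variable {R : Type*} [Ring R] [StarRing R]

lemma defect_mul_self {a : R} (ha : star a * a = 1) : (1 - a * star a) * a = 0 := by
  rw [sub_mul, mul_assoc, ha, one_mul, mul_one, sub_self]

lemma star_mul_defect {a : R} (ha : star a * a = 1) : star a * (1 - a * star a) = 0 := by
  rw [mul_sub, ← mul_assoc, ha, one_mul, mul_one, sub_self]

lemma isStarProjection_defect {a : R} (ha : star a * a = 1) :
    IsStarProjection (1 - a * star a) := by
  refine ⟨?_, ?_⟩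
  · change (1 - a * star a) * (1 - a * star a) = _
    rw [mul_sub, ← mul_assoc, defect_mul_self ha, zero_mul, mul_one, sub_zero]
  · change star (1 - a * star a) = _
    simp

lemma isStarProjection_conj {a p : R} (ha : star a * a = 1) (hp : IsStarProjection p) :
    IsStarProjection (a * (p * star a)) := by
  refine ⟨?_, ?_⟩
  · change a * (p * star a) * (a * (p * star a)) = _
    calc a * (p * star a) * (a * (p * star a))
        = a * (p * (star a * a) * p * star a) := by noncomm_ring
      _ = a * (p * star a) := by rw [ha, mul_one, hp.isIdempotentElem.eq]
  · change star (a * (p * star a)) = _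
    simp [mul_assoc, hp.isSelfAdjoint.star_eq]

lemma one_sub_mul_star_decomp (a b : R) :
    1 - (a * b) * star (a * b)
      = (1 - a * star a) + a * ((1 - b * star b) * star a) := by
  rw [star_mul]
  noncomm_ring

lemma defect_mul_conj (a b : R) (ha : star a * a = 1) :
    (1 - a * star a) * (a * ((1 - b * star b) * star a)) = 0 := by
  rw [← mul_assoc, defect_mul_self ha, zero_mul]

/-- Each summand of an orthogonal sum `d = p + q` of projections is fixed by `d`; the relation
`q * p = 0` needed for this is the adjoint of `p * q = 0`. -/
lemma mul_left_of_decomp {d p q : R} (hp : IsStarProjection p) (hq : IsStarProjection q)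
    (hd : d = p + q) (hpq : p * q = 0) : d * p = p ∧ d * q = q := by
  have hqp : q * p = 0 := by
    have h := congrArg star hpq
    rwa [star_mul, hp.isSelfAdjoint.star_eq, hq.isSelfAdjoint.star_eq, star_zero] at h
  rw [hd, add_mul, add_mul, hpq, hqp, hp.isIdempotentElem.eq, hq.isIdempotentElem.eq]
  simp

lemma star_cross (a b : R) :
    star (a * (1 - b * star b) + (1 - a * star a) * star b)
      = (1 - b * star b) * star a + b * (1 - a * star a) := by
  simp

lemma star_cross_mul_cross (a b : R) (ha : star a * a = 1) (hb : star b * b = 1) :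
    star (a * (1 - b * star b) + (1 - a * star a) * star b)
        * (a * (1 - b * star b) + (1 - a * star a) * star b)
      = (1 - b * star b) + b * ((1 - a * star a) * star b) := by
  rw [star_cross]
  have hp := (isStarProjection_defect ha).isIdempotentElem.eq
  have hq := (isStarProjection_defect hb).isIdempotentElem.eq
  have h1 := defect_mul_self ha
  have h2 := star_mul_defect ha
  generalize 1 - a * star a = p at *
  generalize 1 - b * star b = q at *
  calc (q * star a + b * p) * (a * q + p * star b)
      = q * (star a * a) * q + q * (star a * p) * star b + b * (p * a) * q
        + b * (p * p * star b) := by noncomm_ring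
    _ = q + b * (p * star b) := by simp [ha, hp, hq, h1, h2]

lemma cross_mul_star_cross (a b : R) (ha : star a * a = 1) (hb : star b * b = 1) :
    (a * (1 - b * star b) + (1 - a * star a) * star b)
        * star (a * (1 - b * star b) + (1 - a * star a) * star b)
      = (1 - a * star a) + a * ((1 - b * star b) * star a) := by
  rw [star_cross]
  have hp := (isStarProjection_defect ha).isIdempotentElem.eq
  have hq := (isStarProjection_defect hb).isIdempotentElem.eq
  have h1 := defect_mul_self hb
  have h2 := star_mul_defect hb
  generalize 1 - a * star a = p at *
  generalize 1 - b * star b = q at *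
  calc (a * q + p * star b) * (q * star a + b * p)
      = p * (star b * b) * p + p * (star b * q) * star a + a * (q * b) * p
        + a * (q * q * star a) := by noncomm_ring
    _ = p + a * (q * star a) := by simp [hb, hp, hq, h1, h2]

end StarRing

lemma range_subset_of_mul_eq {H : Type*} [NormedAddCommGroup H] [InnerProductSpace ℂ H]
    {D X : H →L[ℂ] H} (h : D * X = X) : Set.range ⇑X ⊆ Set.range ⇑D := by
  rintro _ ⟨x, rfl⟩
  exact ⟨X x, congrArg (fun T : H →L[ℂ] H => T x) h⟩

open ContinuousLinearMap

set_option maxHeartbeats 1000000 in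
theorem stmt_3 {H : Type*} [NormedAddCommGroup H] [InnerProductSpace ℂ H] [CompleteSpace H]
    (V1 V2 : H →L[ℂ] H)
    (h1 : adjoint V1 ∘L V1 = 1) (h2 : adjoint V2 ∘L V2 = 1)
    (hc : V1 ∘L V2 = V2 ∘L V1) :
    (1 - (V1 ∘L V2) ∘L adjoint (V1 ∘L V2)
        = (1 - V1 ∘L adjoint V1) + V1 ∘L (1 - V2 ∘L adjoint V2) ∘L adjoint V1) ∧
    (1 - (V1 ∘L V2) ∘L adjoint (V1 ∘L V2)
        = (1 - V2 ∘L adjoint V2) + V2 ∘L (1 - V1 ∘L adjoint V1) ∘L adjoint V2) ∧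
    (∀ X ∈ ({1 - V1 ∘L adjoint V1, V1 ∘L (1 - V2 ∘L adjoint V2) ∘L adjoint V1,
             1 - V2 ∘L adjoint V2, V2 ∘L (1 - V1 ∘L adjoint V1) ∘L adjoint V2} :
             Set (H →L[ℂ] H)),
        adjoint X = X ∧ X ∘L X = X ∧
        Set.range ⇑X ⊆ Set.range ⇑(1 - (V1 ∘L V2) ∘L adjoint (V1 ∘L V2))) ∧
    (1 - V1 ∘L adjoint V1) ∘L (V1 ∘L (1 - V2 ∘L adjoint V2) ∘L adjoint V1) = 0 ∧
    (1 - V2 ∘L adjoint V2) ∘L (V2 ∘L (1 - V1 ∘L adjoint V1) ∘L adjoint V2) = 0 ∧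
    adjoint (V1 ∘L (1 - V2 ∘L adjoint V2) + (1 - V1 ∘L adjoint V1) ∘L adjoint V2)
        ∘L (V1 ∘L (1 - V2 ∘L adjoint V2) + (1 - V1 ∘L adjoint V1) ∘L adjoint V2)
        = 1 - (V1 ∘L V2) ∘L adjoint (V1 ∘L V2) ∧
    (V1 ∘L (1 - V2 ∘L adjoint V2) + (1 - V1 ∘L adjoint V1) ∘L adjoint V2)
        ∘L adjoint (V1 ∘L (1 - V2 ∘L adjoint V2) + (1 - V1 ∘L adjoint V1) ∘L adjoint V2)
        = 1 - (V1 ∘L V2) ∘L adjoint (V1 ∘L V2) ∧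
    adjoint ((1 - V2 ∘L adjoint V2) ∘L adjoint V1 + V2 ∘L (1 - V1 ∘L adjoint V1))
        ∘L ((1 - V2 ∘L adjoint V2) ∘L adjoint V1 + V2 ∘L (1 - V1 ∘L adjoint V1))
        = 1 - (V1 ∘L V2) ∘L adjoint (V1 ∘L V2) ∧
    ((1 - V2 ∘L adjoint V2) ∘L adjoint V1 + V2 ∘L (1 - V1 ∘L adjoint V1))
        ∘L adjoint ((1 - V2 ∘L adjoint V2) ∘L adjoint V1 + V2 ∘L (1 - V1 ∘L adjoint V1))
        = 1 - (V1 ∘L V2) ∘L adjoint (V1 ∘L V2) := by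
  -- `∘L` and `adjoint` are definitionally the product and the star of the ring `H →L[ℂ] H`.
  have h1' : star V1 * V1 = 1 := h1
  have h2' : star V2 * V2 = 1 := h2
  have hc' : V1 * V2 = V2 * V1 := hc
  have e1 := one_sub_mul_star_decomp V1 V2
  have e2 : 1 - (V1 * V2) * star (V1 * V2)
      = (1 - V2 * star V2) + V2 * ((1 - V1 * star V1) * star V2) := by
    rw [hc']; exact one_sub_mul_star_decomp V2 V1
  have o1 := defect_mul_conj V1 V2 h1'
  have o2 := defect_mul_conj V2 V1 h2'
  have p1 := isStarProjection_defect h1'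
  have p2 := isStarProjection_defect h2'
  have q1 := isStarProjection_conj h1' p2
  have q2 := isStarProjection_conj h2' p1
  have u1 := (star_cross_mul_cross V1 V2 h1' h2').trans e2.symm
  have u2 := (cross_mul_star_cross V1 V2 h1' h2').trans e1.symm
  -- The second operator of the pair is the adjoint of the first.
  have hU := star_cross V1 V2
  refine ⟨e1, e2, ?_, o1, o2, u1, u2, ?_, ?_⟩
  · rintro X (rfl | rfl | rfl | rfl)
    · exact ⟨p1.isSelfAdjoint, p1.isIdempotentElem,
        range_subset_of_mul_eq (mul_left_of_decomp p1 q1 e1 o1).1⟩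
    · exact ⟨q1.isSelfAdjoint, q1.isIdempotentElem,
        range_subset_of_mul_eq (mul_left_of_decomp p1 q1 e1 o1).2⟩
    · exact ⟨p2.isSelfAdjoint, p2.isIdempotentElem,
        range_subset_of_mul_eq (mul_left_of_decomp p2 q2 e2 o2).1⟩
    · exact ⟨q2.isSelfAdjoint, q2.isIdempotentElem,
        range_subset_of_mul_eq (mul_left_of_decomp p2 q2 e2 o2).2⟩
  · change star ((1 - V2 * star V2) * star V1 + V2 * (1 - V1 * star V1))
      * ((1 - V2 * star V2) * star V1 + V2 * (1 - V1 * star V1)) = _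
    rw [← hU, star_star]
    exact u2
  · change ((1 - V2 * star V2) * star V1 + V2 * (1 - V1 * star V1))
      * star ((1 - V2 * star V2) * star V1 + V2 * (1 - V1 * star V1)) = _
    rw [← hU, star_star]
    exact u1
end

section
/- Let (V1, V2) be a pair of commuting isometries on a complex Hilbert space H. Then there exist a complex Hilbert space K, a linear isometry J : H → K, and a pair of commuting unitary operators (Y1, Y2) on K such that Yj ∘ J = J ∘ Vj for j = 1, 2 and such that Y := Y1 Y2 is the minimal unitary extension of V := V1 V2, i.e. the linear span of ⋃_{n≥0} (Y*)ⁿ (range J) is dense in K. -/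
/-!
The space `K` is the completed direct limit of `H → H → H → ⋯` with all connecting maps equal to
`V = V1 V2`. A vector of the algebraic limit is represented by a sequence `f : ℕ → H` with
`f (n + 1) = V (f n)` for all large `n`. Since `V` is isometric, `⟪f n, g n⟫` is eventually
constant, and this eventual value is a positive semidefinite inner product (`DirLim`); the
completion also divides out the null vectors, in particular the eventually zero sequences.

The embedding `J` sends `h` to `n ↦ V ^ n h`. An isometry `W` commuting with `V` acts entrywise
(`DirLim.pointwise`), and this gives `Y1`, `Y2` from `V1`, `V2`. The delay
`f ↦ (f 0, f 0, f 1, f 2, …)` (`DirLim.delay`) inverts `Y1 Y2` up to null vectors, because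
`V (f (n - 1)) = f n` eventually; composing it with `Y2` (resp. `Y1`) inverts `Y1` (resp. `Y2`), so
both are unitary. Finally, if `f` obeys the recursion from the index `N` on, then
`Y ^ N f = J (f N)`, i.e. `f = (Y*) ^ N (J (f N))`; as such `f` are dense, `Y` is minimal.
-/

open ContinuousLinearMap

universe u

open Filter Topology UniformSpace
open scoped InnerProductSpace ComplexConjugate

noncomputable section

variable {H : Type u} [NormedAddCommGroup H] [InnerProductSpace ℂ H]

lemma isometry_mul_apply (A B : H →ₗᵢ[ℂ] H) (x : H) : (A * B) x = A (B x) := rfl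

/-- The sequences in `H` that eventually satisfy `f (n + 1) = V (f n)`. -/
def dirLimSubmodule (V : H →ₗᵢ[ℂ] H) : Submodule ℂ (ℕ → H) where
  carrier := {f | ∀ᶠ n in atTop, f (n + 1) = V (f n)}
  add_mem' {f g} hf hg := by
    filter_upwards [hf, hg] with n h h'
    simp [h, h']
  zero_mem' := by simp
  smul_mem' c f hf := by
    filter_upwards [hf] with n h
    simp [h]

/-- Representatives of the algebraic direct limit of `H → H → H → ⋯` along `V`. This is a copy of
`dirLimSubmodule V` that does not inherit the product topology of `ℕ → H`. Two sequences that agree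
eventually represent the same vector of the limit, but they are not identified here. -/
def DirLim (V : H →ₗᵢ[ℂ] H) : Type u := dirLimSubmodule V

namespace DirLim

variable {V : H →ₗᵢ[ℂ] H}

instance : AddCommGroup (DirLim V) := inferInstanceAs (AddCommGroup (dirLimSubmodule V))

instance : Module ℂ (DirLim V) := inferInstanceAs (Module ℂ (dirLimSubmodule V))

/-- The underlying sequence of a representative. -/
def val : DirLim V →ₗ[ℂ] (ℕ → H) := (dirLimSubmodule V).subtype

lemma val_injective : Function.Injective (val : DirLim V →ₗ[ℂ] (ℕ → H)) := Subtype.val_injective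

lemma eventually_succ (f : DirLim V) : ∀ᶠ n in atTop, f.val (n + 1) = V (f.val n) := f.2

/-- The limit exists because `⟪f n, g n⟫` is eventually constant. -/
lemma exists_tendsto (f g : DirLim V) :
    ∃ c : ℂ, Tendsto (fun n => ⟪f.val n, g.val n⟫_ℂ) atTop (𝓝 c) := by
  obtain ⟨N, hN⟩ := eventually_atTop.1 (f.eventually_succ.and g.eventually_succ)
  refine ⟨⟪f.val N, g.val N⟫_ℂ, tendsto_const_nhds.congr' ?_⟩
  filter_upwards [eventually_ge_atTop N] with n hn
  induction n, hn using Nat.le_induction with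
  | base => rfl
  | succ n hn ih => rw [(hN n hn).1, (hN n hn).2, V.inner_map_map, ih]

/-- The inner product `lim ⟪f n, g n⟫`, positive semidefinite but not definite. -/
@[reducible] def core (V : H →ₗᵢ[ℂ] H) : PreInnerProductSpace.Core ℂ (DirLim V) where
  inner f g := (exists_tendsto f g).choose
  conj_inner_symm f g := by
    refine tendsto_nhds_unique ?_ (exists_tendsto f g).choose_spec
    exact ((Complex.continuous_conj.tendsto _).comp (exists_tendsto g f).choose_spec).congr
      fun n => inner_conj_symm _ _
  re_inner_nonneg f := by
    refine ge_of_tendsto' ((Complex.continuous_re.tendsto _).comp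
      (exists_tendsto f f).choose_spec) fun n => ?_
    exact inner_self_nonneg (𝕜 := ℂ) (x := f.val n)
  add_left f g h := by
    refine tendsto_nhds_unique (exists_tendsto (f + g) h).choose_spec ?_
    simpa [inner_add_left] using
      (exists_tendsto f h).choose_spec.add (exists_tendsto g h).choose_spec
  smul_left f g c := by
    refine tendsto_nhds_unique (exists_tendsto (c • f) g).choose_spec ?_
    exact ((exists_tendsto f g).choose_spec.const_mul (conj c)).congr
      fun n => by simp [mul_comm]

instance : SeminormedAddCommGroup (DirLim V) :=
  letI := core V; InnerProductSpace.Core.toSeminormedAddCommGroup (𝕜 := ℂ)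

instance : InnerProductSpace ℂ (DirLim V) := InnerProductSpace.ofCore (core V)

lemma tendsto_norm (f : DirLim V) : Tendsto (fun n => ‖f.val n‖) atTop (𝓝 ‖f‖) := by
  have h : Tendsto (fun n => ⟪f.val n, f.val n⟫_ℂ) atTop (𝓝 ⟪f, f⟫_ℂ) :=
    (exists_tendsto f f).choose_spec
  have h' := (Real.continuous_sqrt.tendsto _).comp ((Complex.continuous_re.tendsto _).comp h)
  rw [norm_eq_sqrt_re_inner (𝕜 := ℂ) f]
  refine h'.congr fun n => ?_
  exact (norm_eq_sqrt_re_inner (𝕜 := ℂ) (f.val n)).symm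

/-- Sequences that agree eventually define the same vector of the completion. -/
lemma coe_eq_coe {f g : DirLim V} (h : ∀ᶠ n in atTop, f.val n = g.val n) :
    (f : Completion (DirLim V)) = g := by
  rw [← sub_eq_zero, ← Completion.coe_sub, ← norm_eq_zero, Completion.norm_coe]
  refine tendsto_nhds_unique (tendsto_norm (f - g)) (tendsto_const_nhds.congr' ?_)
  filter_upwards [h] with n hn
  simp [hn]

/-- The entrywise action of an isometry commuting with `V`. -/
def pointwise (W : H →ₗᵢ[ℂ] H) (hW : ∀ x, W (V x) = V (W x)) : DirLim V →ₗᵢ[ℂ] DirLim V where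
  toFun f := ⟨fun n => W (f.val n), by
    filter_upwards [f.eventually_succ] with n hn
    rw [hn, hW]⟩
  map_add' f g := val_injective <| funext fun n => by
    refine .trans ?_ (congrFun (map_add val _ _) n).symm
    exact (congrArg W (congrFun (map_add val f g) n)).trans (map_add W _ _)
  map_smul' c f := val_injective <| funext fun n => by
    refine .trans ?_ (congrFun (map_smul val _ _) n).symm
    exact (congrArg W (congrFun (map_smul val c f) n)).trans (map_smul W _ _)
  norm_map' f := tendsto_nhds_unique (tendsto_norm _) <|
    (tendsto_norm f).congr fun n => (W.norm_map _).symm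

@[simp] lemma pointwise_val (W : H →ₗᵢ[ℂ] H) (hW : ∀ x, W (V x) = V (W x)) (f : DirLim V)
    (n : ℕ) : (pointwise W hW f).val n = W (f.val n) := rfl

/-- The delay `f ↦ (f 0, f 0, f 1, f 2, …)`, the inverse of the entrywise action of `V` up to null
vectors. The duplicated entry at `0` comes from `0 - 1 = 0` and is irrelevant. -/
def delay : DirLim V →ₗᵢ[ℂ] DirLim V where
  toFun f := ⟨fun n => f.val (n - 1), by
    filter_upwards [(tendsto_sub_atTop_nat 1).eventually f.eventually_succ,
      eventually_ge_atTop 1] with n hn h1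
    rw [← hn, Nat.add_sub_cancel, Nat.sub_add_cancel h1]⟩
  map_add' _ _ := rfl
  map_smul' _ _ := rfl
  norm_map' f := tendsto_nhds_unique (tendsto_norm _) <|
    (tendsto_norm f).comp (tendsto_sub_atTop_nat 1)

@[simp] lemma delay_val (f : DirLim V) (n : ℕ) : (delay f).val n = f.val (n - 1) := rfl

lemma eventually_map_pred (f : DirLim V) : ∀ᶠ n in atTop, V (f.val (n - 1)) = f.val n := by
  filter_upwards [(tendsto_sub_atTop_nat 1).eventually f.eventually_succ,
    eventually_ge_atTop 1] with n hn h1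
  rw [← hn, Nat.sub_add_cancel h1]

/-- The canonical map `h ↦ (V ^ n h)ₙ` of `H` into the limit. -/
def orbit : H →ₗᵢ[ℂ] DirLim V where
  toFun h := ⟨fun n => (V ^ n) h, Eventually.of_forall fun n => by
    change (V ^ (n + 1)) h = V ((V ^ n) h)
    rw [pow_succ', isometry_mul_apply]⟩
  map_add' f g := val_injective <| funext fun n => by
    refine .trans ?_ (congrFun (map_add val _ _) n).symm
    exact map_add (V ^ n) f g
  map_smul' c f := val_injective <| funext fun n => by
    refine .trans ?_ (congrFun (map_smul val _ _) n).symm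
    exact map_smul (V ^ n) c f
  norm_map' f := tendsto_nhds_unique (tendsto_norm _) <|
    tendsto_const_nhds.congr fun n => ((V ^ n).norm_map _).symm

@[simp] lemma orbit_val (h : H) (n : ℕ) : (orbit h : DirLim V).val n = (V ^ n) h := rfl

/-- The extension of an isometry of the limit to the completion. -/
def compl (T : DirLim V →ₗᵢ[ℂ] DirLim V) : Completion (DirLim V) →L[ℂ] Completion (DirLim V) :=
  T.toContinuousLinearMap.completion

@[simp] lemma compl_coe (T : DirLim V →ₗᵢ[ℂ] DirLim V) (f : DirLim V) :
    compl T (f : Completion (DirLim V)) = (T f : Completion (DirLim V)) :=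
  Completion.map_coe T.toContinuousLinearMap.uniformContinuous f

lemma ext_coe {A B : Completion (DirLim V) →L[ℂ] Completion (DirLim V)}
    (h : ∀ f : DirLim V, A f = B f) : A = B := by
  ext x
  induction x using Completion.induction_on with
  | hp => exact isClosed_eq A.continuous B.continuous
  | ih f => exact h f

lemma adjoint_compl_comp (T : DirLim V →ₗᵢ[ℂ] DirLim V) :
    adjoint (compl T) ∘L compl T = 1 := by
  rw [← norm_map_iff_adjoint_comp_self]
  intro x
  induction x using Completion.induction_on with
  | hp => exact isClosed_eq (by fun_prop) (by fun_prop)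
  | ih f => simp

lemma compl_comp_adjoint (T S : DirLim V →ₗᵢ[ℂ] DirLim V) (h : compl T ∘L compl S = 1) :
    compl T ∘L adjoint (compl T) = 1 := by
  -- The right inverse `compl S` of the isometry `compl T` is its adjoint.
  have hS : adjoint (compl T) = compl S := by
    calc adjoint (compl T) = adjoint (compl T) ∘L (compl T ∘L compl S) := by rw [h]; rfl
      _ = (adjoint (compl T) ∘L compl T) ∘L compl S := rfl
      _ = compl S := by rw [adjoint_compl_comp]; rfl
  rw [hS, h]

end DirLim

end

open DirLim in
theorem stmt_4 {H : Type u} [NormedAddCommGroup H] [InnerProductSpace ℂ H] [CompleteSpace H]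
    (V1 V2 : H →L[ℂ] H)
    (h1 : ∀ x, ‖V1 x‖ = ‖x‖) (h2 : ∀ x, ‖V2 x‖ = ‖x‖)
    (hc : V1 ∘L V2 = V2 ∘L V1) :
    ∃ (K : Type u) (_ : NormedAddCommGroup K) (_ : InnerProductSpace ℂ K)
      (_ : CompleteSpace K)
      (J : H →L[ℂ] K) (Y1 Y2 : K →L[ℂ] K),
      (∀ h, ‖J h‖ = ‖h‖) ∧
      adjoint Y1 ∘L Y1 = 1 ∧ Y1 ∘L adjoint Y1 = 1 ∧
      adjoint Y2 ∘L Y2 = 1 ∧ Y2 ∘L adjoint Y2 = 1 ∧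
      Y1 ∘L Y2 = Y2 ∘L Y1 ∧
      Y1 ∘L J = J ∘L V1 ∧ Y2 ∘L J = J ∘L V2 ∧
      Dense (↑(Submodule.span ℂ
        (⋃ n : ℕ, ⇑(adjoint (Y1 ∘L Y2) ^ n) '' Set.range ⇑J)) : Set K) := by
  let W1 : H →ₗᵢ[ℂ] H := ⟨V1.toLinearMap, h1⟩
  let W2 : H →ₗᵢ[ℂ] H := ⟨V2.toLinearMap, h2⟩
  have hW : ∀ x, W1 (W2 x) = W2 (W1 x) := fun x => DFunLike.congr_fun hc x
  let V : H →ₗᵢ[ℂ] H := W1 * W2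
  have hV : ∀ x, V x = W1 (W2 x) := fun x => rfl
  have hc1 : ∀ x, W1 (V x) = V (W1 x) := fun x => by rw [hV, hV, hW]
  have hc2 : ∀ x, W2 (V x) = V (W2 x) := fun x => by rw [hV, hV, ← hW]
  have hcn1 : ∀ n x, W1 ((V ^ n) x) = (V ^ n) (W1 x) := fun n => by
    induction n with
    | zero => intro x; rfl
    | succ n ih => intro x; rw [pow_succ, isometry_mul_apply, ih, hc1]; rfl
  have hcn2 : ∀ n x, W2 ((V ^ n) x) = (V ^ n) (W2 x) := fun n => by
    induction n with
    | zero => intro x; rfl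
    | succ n ih => intro x; rw [pow_succ, isometry_mul_apply, ih, hc2]; rfl
  let T1 := pointwise W1 hc1
  let T2 := pointwise W2 hc2
  have hu1 : adjoint (compl T1) ∘L compl T1 = 1 := adjoint_compl_comp T1
  have hu2 : adjoint (compl T2) ∘L compl T2 = 1 := adjoint_compl_comp T2
  have hcomm : compl T1 ∘L compl T2 = compl T2 ∘L compl T1 := ext_coe fun f => by
    simp only [ContinuousLinearMap.comp_apply, compl_coe]
    exact coe_eq_coe (Eventually.of_forall fun n => by simp [T1, T2, hW])
  -- `Y ^ N f` is represented by `V ^ N f n`, which is `V ^ n (f N)` for large `n`.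
  have hpow : ∀ (N : ℕ) (f : DirLim V), ∃ g : DirLim V,
      ((compl T1 ∘L compl T2) ^ N) (f : Completion (DirLim V)) = g ∧
        ∀ n, g.val n = (V ^ N) (f.val n) := by
    intro N f
    induction N with
    | zero => exact ⟨f, rfl, fun n => rfl⟩
    | succ N ih =>
      obtain ⟨g, hg, hgn⟩ := ih
      refine ⟨T1 (T2 g), ?_, fun n => ?_⟩
      · rw [pow_succ', mul_apply_eq_comp, hg]
        simp
      · rw [pow_succ', isometry_mul_apply, ← hgn]
        rfl
  have hadj : ∀ N : ℕ, ∀ x,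
      (adjoint (compl T1 ∘L compl T2) ^ N) (((compl T1 ∘L compl T2) ^ N) x) = x := by
    have hone : adjoint (compl T1 ∘L compl T2) * (compl T1 ∘L compl T2) = 1 := by
      rw [adjoint_comp]
      calc _ = adjoint (compl T2) ∘L (adjoint (compl T1) ∘L compl T1) ∘L compl T2 := rfl
        _ = adjoint (compl T2) ∘L compl T2 := by rw [hu1]; rfl
        _ = 1 := hu2
    intro N x
    rw [← mul_apply_eq_comp, pow_mul_pow_eq_one N hone]
    rfl
  refine ⟨Completion (DirLim V), inferInstance, inferInstance, inferInstance,
    Completion.toComplL ∘L orbit.toContinuousLinearMap, compl T1, compl T2, ?_, hu1, ?_, hu2, ?_,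
    hcomm, ?_, ?_, ?_⟩
  · intro h
    simp
  · refine compl_comp_adjoint T1 (T2.comp delay) (ext_coe fun f => ?_)
    simp only [ContinuousLinearMap.comp_apply, compl_coe]
    exact coe_eq_coe f.eventually_map_pred
  · refine compl_comp_adjoint T2 (T1.comp delay) (ext_coe fun f => ?_)
    simp only [ContinuousLinearMap.comp_apply, compl_coe]
    refine coe_eq_coe (f.eventually_map_pred.mono fun n hn => ?_)
    rw [← hn, hV, hW]
    rfl
  · ext h
    simp only [ContinuousLinearMap.comp_apply, Completion.coe_toComplL,
      LinearIsometry.coe_toContinuousLinearMap, compl_coe]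
    exact coe_eq_coe (Eventually.of_forall fun n => hcn1 n h)
  · ext h
    simp only [ContinuousLinearMap.comp_apply, Completion.coe_toComplL,
      LinearIsometry.coe_toContinuousLinearMap, compl_coe]
    exact coe_eq_coe (Eventually.of_forall fun n => hcn2 n h)
  · refine Completion.denseRange_coe.mono ?_
    rintro _ ⟨f, rfl⟩
    obtain ⟨N, hN⟩ := eventually_atTop.1 f.eventually_succ
    have hshift : ∀ n, f.val (N + n) = (V ^ n) (f.val N) := fun n => by
      induction n with
      | zero => rfl
      | succ n ih => rw [← add_assoc, hN _ (by omega), ih, pow_succ']; rfl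
    refine Submodule.subset_span (Set.mem_iUnion.2 ⟨N, _, ⟨f.val N, rfl⟩, ?_⟩)
    obtain ⟨g, hg, hgn⟩ := hpow N f
    have hgJ : (g : Completion (DirLim V)) = (orbit (f.val N) : DirLim V) := by
      refine coe_eq_coe ?_
      filter_upwards [eventually_ge_atTop N] with n hn
      obtain ⟨k, rfl⟩ := Nat.exists_eq_add_of_le hn
      rw [hgn, hshift, orbit_val, ← isometry_mul_apply, ← pow_add]
    have := hadj N f
    rw [hg, hgJ] at this
    exact this
end

section
/- Let F be a complex Hilbert space, P an orthogonal projection on F, and U a unitary operator on F. Let V1 = M_{U*(I−P) + z U*P} and V2 = M_{PU + z (I−P)U} be the corresponding commuting isometries on ℓ²(ℕ,F). Then the pair (V1, V2) is doubly commuting, i.e. V1* V2 = V2 V1*, if and only if (I − P) U P = 0, i.e. if and only if the range of P is invariant under U. -/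
/-!
Write `C = P U` and `D = (1 - P) U`. The first operator `V₁` has symbol `D* + z C*`, so its adjoint
acts as `(V₁* f) n = D (f n) + C (f (n + 1))`, while `(V₂ f) n = C (f n) + D (f (n - 1))`. Expanding,
`V₁* V₂ f` and `V₂ V₁* f` agree in every coordinate `n ≥ 1`, and their difference in coordinate `0`
is `D C (f 0)`. Hence the pair is doubly commuting iff `D C = (1 - P) U P U = 0`, which, `U` being
invertible, amounts to `(1 - P) U P = 0`.
-/

open ContinuousLinearMap

/-- The adjoint of multiplication by `A + zB` on `ℓ²(ℕ, F)` in coordinates, obtained by testing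
against the sequences supported at a single index. -/
theorem adjoint_symbol_apply {F : Type*} [NormedAddCommGroup F] [InnerProductSpace ℂ F]
    [CompleteSpace F] (A B : F →L[ℂ] F)
    (V : lp (fun _ : ℕ => F) 2 →L[ℂ] lp (fun _ : ℕ => F) 2)
    (h0 : ∀ f : lp (fun _ : ℕ => F) 2, (V f) 0 = A (f 0))
    (hs : ∀ (f : lp (fun _ : ℕ => F) 2) (n : ℕ), (V f) (n + 1) = A (f (n + 1)) + B (f n))
    (f : lp (fun _ : ℕ => F) 2) (n : ℕ) :
    (adjoint V f) n = adjoint A (f n) + adjoint B (f (n + 1)) := by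
  refine ext_inner_left ℂ fun (x : F) => ?_
  have hV : V (lp.single 2 n x) = lp.single 2 n (A x) + lp.single 2 (n + 1) (B x) := by
    ext k
    rcases k with _ | k
    · rcases n with _ | n <;> simp [h0, lp.single_apply]
    · rw [hs]
      by_cases h1 : k + 1 = n
      · subst h1
        simp [lp.single_apply]
      · by_cases h2 : k = n <;> simp [lp.single_apply, h1, h2]
  have single_inner (i : ℕ) (a : F) (g : lp (fun _ : ℕ => F) 2) :
      inner ℂ (lp.single 2 i a) g = inner ℂ a (g i) := lp.inner_single_left i a g
  calc inner ℂ x ((adjoint V f) n)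
      = inner ℂ (V (lp.single 2 n x)) f := by
        rw [← adjoint_inner_right]
        exact (single_inner n x (adjoint V f)).symm
    _ = inner ℂ (A x) (f n) + inner ℂ (B x) (f (n + 1)) := by
        rw [hV, inner_add_left, single_inner, single_inner]
    _ = inner ℂ x (adjoint A (f n) + adjoint B (f (n + 1))) := by
        rw [inner_add_right, adjoint_inner_right, adjoint_inner_right]

theorem stmt_5 {F : Type*} [NormedAddCommGroup F] [InnerProductSpace ℂ F] [CompleteSpace F]
    (P U : F →L[ℂ] F)
    (hP : adjoint P = P) (hP2 : P ∘L P = P)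
    (hU1 : adjoint U ∘L U = 1) (hU2 : U ∘L adjoint U = 1)
    (V1 V2 : lp (fun _ : ℕ => F) 2 →L[ℂ] lp (fun _ : ℕ => F) 2)
    (hV1a : ∀ f : lp (fun _ : ℕ => F) 2, (V1 f) 0 = (adjoint U ∘L (1 - P)) (f 0))
    (hV1b : ∀ (f : lp (fun _ : ℕ => F) 2) (n : ℕ),
      (V1 f) (n + 1) = (adjoint U ∘L (1 - P)) (f (n + 1)) + (adjoint U ∘L P) (f n))
    (hV2a : ∀ f : lp (fun _ : ℕ => F) 2, (V2 f) 0 = (P ∘L U) (f 0))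
    (hV2b : ∀ (f : lp (fun _ : ℕ => F) 2) (n : ℕ),
      (V2 f) (n + 1) = (P ∘L U) (f (n + 1)) + ((1 - P) ∘L U) (f n)) :
    adjoint V1 ∘L V2 = V2 ∘L adjoint V1 ↔ ((1 - P) ∘L U) ∘L P = 0 := by
  have hone : adjoint (1 : F →L[ℂ] F) = 1 := adjoint_id
  have hA : adjoint (adjoint U ∘L (1 - P)) = (1 - P) ∘L U := by
    rw [adjoint_comp, adjoint_adjoint, map_sub, hP, hone]
  have hB : adjoint (adjoint U ∘L P) = P ∘L U := by
    rw [adjoint_comp, adjoint_adjoint, hP]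
  have hadj := adjoint_symbol_apply _ _ V1 hV1a hV1b
  rw [hA, hB] at hadj
  have hDC : ((1 - P) ∘L U) ∘L P = 0 ↔ ∀ x, ((1 - P) ∘L U) ((P ∘L U) x) = 0 := by
    constructor
    · intro h x
      exact DFunLike.congr_fun h (U x)
    · intro h
      ext x
      have hx : U (adjoint U x) = x := DFunLike.congr_fun hU2 x
      simpa [hx] using h (adjoint U x)
  rw [hDC]
  obtain ⟨D, hD⟩ : ∃ D : F →L[ℂ] F, D = (1 - P) ∘L U := ⟨_, rfl⟩
  obtain ⟨C, hC⟩ : ∃ C : F →L[ℂ] F, C = P ∘L U := ⟨_, rfl⟩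
  have hV2s (f : lp (fun _ : ℕ => F) 2) (n : ℕ) : (V2 f) (n + 1) = C (f (n + 1)) + D (f n) := by
    rw [hC, hD]
    exact hV2b f n
  rw [← hC] at hV2a
  rw [← hC, ← hD] at hadj ⊢
  constructor
  · intro h x
    have h0 : (adjoint V1 (V2 (lp.single 2 0 x))) 0 = (V2 (adjoint V1 (lp.single 2 0 x))) 0 :=
      congrArg (fun T => (T (lp.single 2 0 x)) 0) h
    rw [hadj, hV2s, hV2a, hV2a, hadj] at h0
    simpa [lp.single_apply] using h0
  · intro h
    ext f n
    rcases n with _ | n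
    · simp only [comp_apply, hadj, hV2a, hV2s, map_add, h]
      abel
    · simp only [comp_apply, hadj, hV2s, map_add]
      abel
end

section
/- Let (T1, T2) be a pair of commuting contractions on a complex Hilbert space H and set T = T1 T2. Let Q be the positive square root of the strong-operator-topology limit Q² of the decreasing sequence of positive operators Tⁿ T*ⁿ. Then there exist a complex Hilbert space K, a bounded operator Π : H → K with ‖Π h‖ = ‖Q h‖ for all h ∈ H, and a pair of commuting unitary operators (W1, W2) on K such that W1* Π = Π T1*, W2* Π = Π T2*, (W1 W2)* Π = Π T*, and the linear span of ⋃_{n≥0} (W1 W2)ⁿ (range Π) is dense in K. (Existence of the canonical pair of commuting unitaries associated with (T1, T2).) -/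
/-!
Write `X1`, `X2` for the adjoints of `T1`, `T2` and `X = X1 X2`. Since `‖Q h‖ = lim ‖Xⁿ h‖`, the
operator `X` preserves the seminorm `‖Q ·‖` (shift the limit), and each `Xᵢ` decreases it (it is a
contraction commuting with `X`); as `X` is the product of the two, each `Xᵢ` preserves it as well.

The space `K` is the inductive limit of `H → H → ⋯` along `X` with respect to this seminorm. It is
realised on the space of sequences `f : ℕ → H` that are eventually orbits of `X`, that is
`f (n + 1) = X (f n)` for all large `n`. The semi-inner product of `f` and `g` is the eventually
constant value of `⟪Q (f n), Q (g n)⟫`, and `K` is the Hausdorff completion. On it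
* `Xᵢ` acts termwise, as an isometry `aᵢ`;
* the right shift `r` is an isometry commuting with the `aᵢ` and satisfies `r a₁ a₂ = 1`, because
  two sequences that agree eventually have distance zero;
* `Π h` is the orbit `n ↦ Xⁿ h`.

The unitaries are `W1 = a₂ r` and `W2 = a₁ r`, whose adjoints are `a₁` and `a₂`. Then `W1 W2 = r`,
and an eventual orbit is indistinguishable from some `rᴺ Π h`, which gives the density.
-/

open ContinuousLinearMap

universe u

open Filter Topology UniformSpace

theorem clm_mul_apply {K : Type u} [NormedAddCommGroup K] [InnerProductSpace ℂ K]
    (a b : K →L[ℂ] K) (x : K) : (a * b) x = a (b x) := rfl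

/-! ### Passing from a semi-inner product space to its completion -/

theorem exists_completion_isometry {E : Type u} [SeminormedAddCommGroup E] [InnerProductSpace ℂ E]
    (A : E →ₗ[ℂ] E) (hA : ∀ x, ‖A x‖ = ‖x‖) :
    ∃ a : Completion E →L[ℂ] Completion E,
      (∀ x : E, a (x : Completion E) = (A x : Completion E)) ∧ ∀ y, ‖a y‖ = ‖y‖ := by
  let A' : E →L[ℂ] E := A.mkContinuous 1 (fun x => by simp [hA])
  let e : E →L[ℂ] Completion E := Completion.toComplL
  have he : ∀ x : E, ((e.comp A').extend e) (x : Completion E) = (A x : Completion E) := by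
    intro x
    exact ContinuousLinearMap.extend_eq (e.comp A') (e := e) Completion.denseRange_coe
      (Completion.isUniformInducing_coe E) x
  refine ⟨(e.comp A').extend e, he, fun y => ?_⟩
  induction y using Completion.induction_on with
  | hp => exact isClosed_eq (by fun_prop) (by fun_prop)
  | ih x => rw [he, Completion.norm_coe, Completion.norm_coe, hA]

theorem completion_clm_ext {E : Type u} [SeminormedAddCommGroup E] [InnerProductSpace ℂ E]
    {a b : Completion E →L[ℂ] Completion E}
    (h : ∀ x : E, a (x : Completion E) = b (x : Completion E)) : a = b := by
  ext y
  induction y using Completion.induction_on with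
  | hp => exact isClosed_eq (by fun_prop) (by fun_prop)
  | ih x => exact h x

theorem completion_coe_eq {E : Type u} [SeminormedAddCommGroup E] {x y : E} (h : ‖x - y‖ = 0) :
    (x : Completion E) = (y : Completion E) := by
  rw [← sub_eq_zero, ← Completion.coe_sub, ← norm_eq_zero, Completion.norm_coe, h]

/-- A norm-preserving operator with a right inverse is unitary, so the right inverse `b` has
adjoint `a`. -/
theorem adjoint_eq_of_isometry {K : Type u} [NormedAddCommGroup K] [InnerProductSpace ℂ K]
    [CompleteSpace K] {a b : K →L[ℂ] K} (ha : ∀ y, ‖a y‖ = ‖y‖) (hab : a * b = 1) :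
    adjoint b = a := by
  have h : adjoint a * a = 1 := (a.norm_map_iff_adjoint_comp_self).1 ha
  have : adjoint a = b := left_inv_eq_right_inv h hab
  rw [← this, adjoint_adjoint]

/-- The canonical pair of commuting unitaries, from its incarnation on a semi-inner product
space `E`: isometries `A1`, `A2` and an isometry `R` that inverts `A1 A2` up to vectors of norm
zero. -/
theorem exists_unitaries_of_seminormed {H : Type u} [NormedAddCommGroup H] [InnerProductSpace ℂ H]
    (X1 X2 Q : H →L[ℂ] H)
    {E : Type u} [SeminormedAddCommGroup E] [InnerProductSpace ℂ E]
    (P : H →ₗ[ℂ] E) (A1 A2 R : E →ₗ[ℂ] E)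
    (hP : ∀ h, ‖P h‖ = ‖Q h‖)
    (hA1 : ∀ x, ‖A1 x‖ = ‖x‖) (hA2 : ∀ x, ‖A2 x‖ = ‖x‖) (hR : ∀ x, ‖R x‖ = ‖x‖)
    (h12 : ∀ x, A1 (A2 x) = A2 (A1 x))
    (h1R : ∀ x, A1 (R x) = R (A1 x)) (h2R : ∀ x, A2 (R x) = R (A2 x))
    (hinv : ∀ x, ‖R (A1 (A2 x)) - x‖ = 0)
    (h1P : ∀ h, A1 (P h) = P (X1 h)) (h2P : ∀ h, A2 (P h) = P (X2 h))
    (hdense : ∀ x, ∃ n h, ‖(R ^ n) (P h) - x‖ = 0) :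
    ∃ (K : Type u) (_ : NormedAddCommGroup K) (_ : InnerProductSpace ℂ K)
      (_ : CompleteSpace K)
      (Pi : H →L[ℂ] K) (W1 W2 : K →L[ℂ] K),
      (∀ h, ‖Pi h‖ = ‖Q h‖) ∧
      adjoint W1 ∘L W1 = 1 ∧ W1 ∘L adjoint W1 = 1 ∧
      adjoint W2 ∘L W2 = 1 ∧ W2 ∘L adjoint W2 = 1 ∧
      W1 ∘L W2 = W2 ∘L W1 ∧
      adjoint W1 ∘L Pi = Pi ∘L X1 ∧
      adjoint W2 ∘L Pi = Pi ∘L X2 ∧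
      adjoint (W1 ∘L W2) ∘L Pi = Pi ∘L (X2 ∘L X1) ∧
      Dense (↑(Submodule.span ℂ
        (⋃ n : ℕ, ⇑((W1 ∘L W2) ^ n) '' Set.range ⇑Pi)) : Set K) := by
  obtain ⟨a1, ha1, na1⟩ := exists_completion_isometry A1 hA1
  obtain ⟨a2, ha2, na2⟩ := exists_completion_isometry A2 hA2
  obtain ⟨r, hr, nr⟩ := exists_completion_isometry R hR
  have c12 : a1 * a2 = a2 * a1 := completion_clm_ext fun x => by
    simp only [clm_mul_apply, ha1, ha2, h12]
  have c1r : a1 * r = r * a1 := completion_clm_ext fun x => by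
    simp only [clm_mul_apply, ha1, hr, h1R]
  have c2r : a2 * r = r * a2 := completion_clm_ext fun x => by
    simp only [clm_mul_apply, ha2, hr, h2R]
  have cinv : r * (a1 * a2) = 1 := completion_clm_ext fun x => by
    simp only [clm_mul_apply, ha1, ha2, hr]
    exact completion_coe_eq (hinv x)
  have i1 : a1 * (a2 * r) = 1 := by rw [c2r, ← mul_assoc, c1r, mul_assoc, cinv]
  have i1' : a2 * r * a1 = 1 := by rw [c2r, mul_assoc, ← c12, cinv]
  have i2 : a2 * (a1 * r) = 1 := by rw [c1r, ← mul_assoc, c2r, mul_assoc, ← c12, cinv]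
  have i2' : a1 * r * a2 = 1 := by rw [c1r, mul_assoc, cinv]
  have d1 : adjoint (a2 * r) = a1 := adjoint_eq_of_isometry na1 i1
  have d2 : adjoint (a1 * r) = a2 := adjoint_eq_of_isometry na2 i2
  have w12 : (a2 * r) * (a1 * r) = r := by rw [← mul_assoc, i1', one_mul]
  have w21 : (a1 * r) * (a2 * r) = r := by rw [← mul_assoc, i2', one_mul]
  let P' : H →L[ℂ] E := P.mkContinuous ‖Q‖ (fun x => by rw [hP]; exact Q.le_opNorm x)
  let Pi : H →L[ℂ] Completion E := (Completion.toComplL : E →L[ℂ] Completion E).comp P'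
  have hPi : ∀ h, Pi h = (P h : Completion E) := fun _ => rfl
  have e1 : a1 ∘L Pi = Pi ∘L X1 := by
    ext h; simp only [comp_apply, hPi, ha1, h1P]
  have e2 : a2 ∘L Pi = Pi ∘L X2 := by
    ext h; simp only [comp_apply, hPi, ha2, h2P]
  refine ⟨Completion E, inferInstance, inferInstance, inferInstance, Pi, a2 * r, a1 * r,
    fun h => by rw [hPi, Completion.norm_coe, hP], ?_, ?_, ?_, ?_, ?_, ?_, ?_, ?_, ?_⟩
  · rw [d1]; exact i1
  · rw [d1]; exact i1'
  · rw [d2]; exact i2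
  · rw [d2]; exact i2'
  · exact w12.trans w21.symm
  · rw [d1, e1]
  · rw [d2, e2]
  · rw [adjoint_comp, d1, d2, comp_assoc, e1, ← comp_assoc, e2, comp_assoc]
  · have hw : (a2 * r) ∘L (a1 * r) = r := w12
    rw [hw]
    have hrn : ∀ (n : ℕ) (x : E), (r ^ n) (x : Completion E) = ((R ^ n) x : Completion E) := by
      intro n
      induction n with
      | zero => intro x; simp
      | succ n ih => intro x; rw [pow_succ, pow_succ, clm_mul_apply, hr, ih]; rfl
    refine Completion.denseRange_coe.mono ?_
    rintro _ ⟨x, rfl⟩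
    obtain ⟨n, h, hx⟩ := hdense x
    apply Submodule.subset_span
    refine Set.mem_iUnion.2 ⟨n, Pi h, ⟨h, rfl⟩, ?_⟩
    rw [hPi, hrn]
    exact completion_coe_eq hx

/-! ### The space of eventual orbits -/

section EventualOrbits

variable {H : Type u} [NormedAddCommGroup H] [InnerProductSpace ℂ H]

/-- The sequences in `H` that eventually follow the dynamics of `X`. -/
def eventualOrbits (X : H →L[ℂ] H) : Submodule ℂ (ℕ → H) where
  carrier := {f | ∀ᶠ n in atTop, f (n + 1) = X (f n)}
  add_mem' := by
    intro f g hf hg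
    filter_upwards [hf, hg] with n h1 h2
    simp [h1, h2]
  zero_mem' := by simp
  smul_mem' := by
    intro c f hf
    filter_upwards [hf] with n h1
    simp [h1]

/-- The vector space underlying `eventualOrbits X`. It is a separate type so as not to inherit the
topology of pointwise convergence. -/
def EventualOrbit (X : H →L[ℂ] H) : Type u := ↥(eventualOrbits X)

noncomputable instance (X : H →L[ℂ] H) : AddCommGroup (EventualOrbit X) :=
  inferInstanceAs (AddCommGroup ↥(eventualOrbits X))

noncomputable instance (X : H →L[ℂ] H) : Module ℂ (EventualOrbit X) :=
  inferInstanceAs (Module ℂ ↥(eventualOrbits X))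

/-- The semi-inner product of two eventual orbits: the eventual value of `⟪Q (f n), Q (g n)⟫`. -/
noncomputable def orbitInner {X : H →L[ℂ] H} (Q : H →L[ℂ] H) (f g : EventualOrbit X) : ℂ :=
  limUnder atTop (fun n => inner ℂ (Q (f.1 n)) (Q (g.1 n)))

theorem inner_eq_of_norm_eq {X Q : H →L[ℂ] H} (hX : ∀ h, ‖Q (X h)‖ = ‖Q h‖) (x y : H) :
    inner ℂ (Q (X x)) (Q (X y)) = inner ℂ (Q x) (Q y) := by
  simp only [inner_eq_sum_norm_sq_div_four, ← map_add, ← map_sub, ← map_smul, hX]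

theorem orbitInner_eventually {X Q : H →L[ℂ] H} (hX : ∀ h, ‖Q (X h)‖ = ‖Q h‖)
    (f g : EventualOrbit X) :
    ∀ᶠ n in atTop, orbitInner Q f g = inner ℂ (Q (f.1 n)) (Q (g.1 n)) := by
  obtain ⟨N, hN⟩ := eventually_atTop.1 (f.2.and g.2)
  have key : ∀ n ≥ N, inner ℂ (Q (f.1 n)) (Q (g.1 n)) = inner ℂ (Q (f.1 N)) (Q (g.1 N)) := by
    intro n hn
    induction n, hn using Nat.le_induction with
    | base => rfl
    | succ n hn ih => rw [(hN n hn).1, (hN n hn).2, inner_eq_of_norm_eq hX, ih]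
  have hlim : orbitInner Q f g = inner ℂ (Q (f.1 N)) (Q (g.1 N)) := by
    apply Tendsto.limUnder_eq
    refine tendsto_const_nhds.congr' ?_
    filter_upwards [eventually_ge_atTop N] with n hn using (key n hn).symm
  filter_upwards [eventually_ge_atTop N] with n hn
  rw [hlim, key n hn]

/-- The semi-inner product `orbitInner`, available when `X` preserves the seminorm `‖Q ·‖`. -/
@[reducible]
noncomputable def orbitCore (X Q : H →L[ℂ] H) (hX : ∀ h, ‖Q (X h)‖ = ‖Q h‖) :
    PreInnerProductSpace.Core ℂ (EventualOrbit X) where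
  inner f g := orbitInner Q f g
  conj_inner_symm f g := by
    obtain ⟨n, h1, h2⟩ := ((orbitInner_eventually hX f g).and (orbitInner_eventually hX g f)).exists
    rw [h1, h2, inner_conj_symm]
  re_inner_nonneg f := by
    obtain ⟨n, h1⟩ := (orbitInner_eventually hX f f).exists
    rw [h1]
    exact inner_self_nonneg
  add_left f g k := by
    obtain ⟨n, h1, h2, h3⟩ := ((orbitInner_eventually hX (f + g) k).and
      ((orbitInner_eventually hX f k).and (orbitInner_eventually hX g k))).exists
    rw [h1, h2, h3]
    have : (f + g).1 n = f.1 n + g.1 n := rfl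
    rw [this, map_add, inner_add_left]
  smul_left f g c := by
    obtain ⟨n, h1, h2⟩ := ((orbitInner_eventually hX (c • f) g).and
      (orbitInner_eventually hX f g)).exists
    rw [h1, h2]
    have : (c • f).1 n = c • f.1 n := rfl
    rw [this, map_smul, inner_smul_left]

/-- Termwise application of an operator `Y` commuting with `X`. -/
noncomputable def orbitMap {X : H →L[ℂ] H} (Y : H →L[ℂ] H) (hY : ∀ h, Y (X h) = X (Y h)) :
    EventualOrbit X →ₗ[ℂ] EventualOrbit X where
  toFun f := ⟨fun n => Y (f.1 n), by
    filter_upwards [f.2] with n hn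
    rw [hn, hY]⟩
  map_add' f g := Subtype.ext (funext fun n => map_add Y (f.1 n) (g.1 n))
  map_smul' c f := Subtype.ext (funext fun n => map_smul Y c (f.1 n))

/-- The right shift, with `0` filled in at the first place. -/
noncomputable def orbitShift (X : H →L[ℂ] H) : EventualOrbit X →ₗ[ℂ] EventualOrbit X where
  toFun f := ⟨fun n => n.casesOn 0 f.1, by
    filter_upwards [(tendsto_sub_atTop_nat 1).eventually f.2, eventually_ge_atTop 1] with n hn h1
    obtain ⟨m, rfl⟩ := Nat.exists_eq_add_of_le' h1
    exact hn⟩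
  map_add' f g := Subtype.ext (funext fun n => by
    cases n with
    | zero => exact (add_zero (0 : H)).symm
    | succ n => rfl)
  map_smul' c f := Subtype.ext (funext fun n => by
    cases n with
    | zero => exact (smul_zero c).symm
    | succ n => rfl)

/-- The orbit of a vector of `H`. -/
noncomputable def orbitOf (X : H →L[ℂ] H) : H →ₗ[ℂ] EventualOrbit X where
  toFun h := ⟨fun n => (X ^ n) h, Eventually.of_forall fun n => by
    change (X ^ (n + 1)) h = X ((X ^ n) h)
    rw [pow_succ', clm_mul_apply]⟩
  map_add' f g := Subtype.ext (funext fun n => map_add (X ^ n) f g)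
  map_smul' c f := Subtype.ext (funext fun n => map_smul (X ^ n) c f)

theorem orbitShift_pow_apply (X : H →L[ℂ] H) (N n : ℕ) (f : EventualOrbit X) :
    ((orbitShift X ^ N) f).1 (n + N) = f.1 n := by
  induction N with
  | zero => rfl
  | succ N ih => rw [pow_succ']; exact ih

/-- The existence of the unitaries needs from `X1`, `X2` only that they commute and preserve the
seminorm `‖Q ·‖`. -/
theorem exists_unitaries_of_seminorm_preserving (X1 X2 Q : H →L[ℂ] H)
    (hc : ∀ h, X1 (X2 h) = X2 (X1 h))
    (hX1 : ∀ h, ‖Q (X1 h)‖ = ‖Q h‖) (hX2 : ∀ h, ‖Q (X2 h)‖ = ‖Q h‖) :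
    ∃ (K : Type u) (_ : NormedAddCommGroup K) (_ : InnerProductSpace ℂ K)
      (_ : CompleteSpace K)
      (Pi : H →L[ℂ] K) (W1 W2 : K →L[ℂ] K),
      (∀ h, ‖Pi h‖ = ‖Q h‖) ∧
      adjoint W1 ∘L W1 = 1 ∧ W1 ∘L adjoint W1 = 1 ∧
      adjoint W2 ∘L W2 = 1 ∧ W2 ∘L adjoint W2 = 1 ∧
      W1 ∘L W2 = W2 ∘L W1 ∧
      adjoint W1 ∘L Pi = Pi ∘L X1 ∧
      adjoint W2 ∘L Pi = Pi ∘L X2 ∧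
      adjoint (W1 ∘L W2) ∘L Pi = Pi ∘L (X2 ∘L X1) ∧
      Dense (↑(Submodule.span ℂ
        (⋃ n : ℕ, ⇑((W1 ∘L W2) ^ n) '' Set.range ⇑Pi)) : Set K) := by
  set X : H →L[ℂ] H := X1 * X2 with hXdef
  have hXa : ∀ h, X h = X1 (X2 h) := fun h => rfl
  have hX : ∀ h, ‖Q (X h)‖ = ‖Q h‖ := fun h => by rw [hXa, hX1, hX2]
  have c1 : ∀ h, X1 (X h) = X (X1 h) := fun h => by rw [hXa, hXa, ← hc h]
  have c2 : ∀ h, X2 (X h) = X (X2 h) := fun h => by rw [hXa, hXa, ← hc (X2 h)]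
  let core : PreInnerProductSpace.Core ℂ (EventualOrbit X) := orbitCore X Q hX
  let : SeminormedAddCommGroup (EventualOrbit X) :=
    InnerProductSpace.Core.toSeminormedAddCommGroup (𝕜 := ℂ)
  let : InnerProductSpace ℂ (EventualOrbit X) := InnerProductSpace.ofCore core
  have hnorm : ∀ f : EventualOrbit X, ∀ᶠ n in atTop, ‖f‖ = ‖Q (f.1 n)‖ := by
    intro f
    filter_upwards [orbitInner_eventually hX f f] with n hn
    have h1 : ‖f‖ ^ 2 = ‖Q (f.1 n)‖ ^ 2 := by
      rw [@norm_sq_eq_re_inner ℂ, @norm_sq_eq_re_inner ℂ, ← hn]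
      rfl
    exact (sq_eq_sq₀ (norm_nonneg _) (norm_nonneg _)).1 h1
  -- Eventually equal sequences have distance zero.
  have hzero : ∀ f g : EventualOrbit X, (∀ᶠ n in atTop, f.1 n = g.1 n) → ‖f - g‖ = 0 := by
    intro f g hfg
    obtain ⟨n, h1, h2⟩ := ((hnorm (f - g)).and hfg).exists
    have : (f - g).1 n = f.1 n - g.1 n := rfl
    rw [h1, this, h2, sub_self, map_zero, norm_zero]
  have hmap : ∀ (Y : H →L[ℂ] H) (hY : ∀ h, Y (X h) = X (Y h)), (∀ h, ‖Q (Y h)‖ = ‖Q h‖) →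
      ∀ f, ‖orbitMap Y hY f‖ = ‖f‖ := by
    intro Y hY hn f
    obtain ⟨n, h1, h2⟩ := ((hnorm (orbitMap Y hY f)).and (hnorm f)).exists
    rw [h1, h2]
    exact hn _
  have hcomm : ∀ (Y : H →L[ℂ] H) (hY : ∀ h, Y (X h) = X (Y h)) (f : EventualOrbit X),
      orbitMap Y hY (orbitShift X f) = orbitShift X (orbitMap Y hY f) := by
    intro Y hY f
    refine Subtype.ext (funext fun n => ?_)
    cases n with
    | zero => exact map_zero Y
    | succ n => rfl
  have hpowc : ∀ (Y : H →L[ℂ] H), (∀ h, Y (X h) = X (Y h)) → ∀ (n : ℕ) h,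
      Y ((X ^ n) h) = (X ^ n) (Y h) := by
    intro Y hY n h
    have : Commute Y X := by ext h; exact hY h
    exact congrArg (fun Z : H →L[ℂ] H => Z h) (this.pow_right n).eq
  refine exists_unitaries_of_seminormed X1 X2 Q (orbitOf X) (orbitMap X1 c1) (orbitMap X2 c2)
    (orbitShift X) ?_ (hmap X1 c1 hX1) (hmap X2 c2 hX2) ?_ ?_ (hcomm X1 c1) (hcomm X2 c2) ?_ ?_ ?_ ?_
  · intro h
    obtain ⟨n, h1⟩ := (hnorm (orbitOf X h)).exists
    rw [h1]
    change ‖Q ((X ^ n) h)‖ = _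
    clear h1
    induction n with
    | zero => rfl
    | succ n ih => rw [pow_succ', clm_mul_apply, hX, ih]
  · intro f
    obtain ⟨n, h1, h2⟩ := (((tendsto_add_atTop_nat 1).eventually (hnorm (orbitShift X f))).and
      (hnorm f)).exists
    rw [h1, h2]
    rfl
  · intro f
    exact Subtype.ext (funext fun n => hc (f.1 n))
  · intro f
    apply hzero
    filter_upwards [(tendsto_sub_atTop_nat 1).eventually f.2, eventually_ge_atTop 1] with n hn h1
    obtain ⟨m, rfl⟩ := Nat.exists_eq_add_of_le' h1
    exact hn.symm
  · intro h
    exact Subtype.ext (funext fun n => hpowc X1 c1 n h)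
  · intro h
    exact Subtype.ext (funext fun n => hpowc X2 c2 n h)
  · intro f
    -- From time `N` on, `f` is the orbit of `f N`.
    obtain ⟨N, hN⟩ := eventually_atTop.1 f.2
    refine ⟨N, f.1 N, hzero _ _ ?_⟩
    filter_upwards [eventually_ge_atTop N] with n hn
    obtain ⟨m, rfl⟩ := Nat.exists_eq_add_of_le' hn
    rw [orbitShift_pow_apply]
    change (X ^ m) (f.1 N) = _
    clear hn
    induction m with
    | zero => simp
    | succ m ih =>
      rw [pow_succ', clm_mul_apply, ih, show m + 1 + N = (m + N) + 1 by ring, hN _ (by omega)]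

end EventualOrbits

/-! ### The seminorm defined by `Q` -/

theorem tendsto_norm_adjoint_pow {H : Type u} [NormedAddCommGroup H] [InnerProductSpace ℂ H]
    [CompleteSpace H] (T Q : H →L[ℂ] H) (hQpos : Q.IsPositive)
    (hQsq : ∀ h : H, Tendsto (fun n : ℕ => ((T ^ n) ∘L ((adjoint T) ^ n)) h)
      atTop (𝓝 ((Q ∘L Q) h))) (h : H) :
    Tendsto (fun n : ℕ => ‖((adjoint T) ^ n) h‖) atTop (𝓝 ‖Q h‖) := by
  have hadj : ∀ n : ℕ, adjoint (T ^ n) = (adjoint T) ^ n := fun n => star_pow T n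
  have h1 : Tendsto (fun n : ℕ => (inner ℂ (((T ^ n) ∘L ((adjoint T) ^ n)) h) h).re) atTop
      (𝓝 (inner ℂ ((Q ∘L Q) h) h).re) :=
    (Complex.continuous_re.tendsto _).comp ((hQsq h).inner tendsto_const_nhds)
  have h2 : ∀ n : ℕ, (inner ℂ (((T ^ n) ∘L ((adjoint T) ^ n)) h) h).re
      = ‖((adjoint T) ^ n) h‖ ^ 2 := by
    intro n
    rw [comp_apply, ← adjoint_inner_right, hadj, @norm_sq_eq_re_inner ℂ]
    rfl
  have h3 : (inner ℂ ((Q ∘L Q) h) h).re = ‖Q h‖ ^ 2 := by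
    rw [comp_apply, ← adjoint_inner_right, hQpos.isSelfAdjoint.adjoint_eq, @norm_sq_eq_re_inner ℂ]
    rfl
  simp only [h2, h3] at h1
  simpa [Real.sqrt_sq (norm_nonneg _)] using h1.sqrt

theorem stmt_7 {H : Type u} [NormedAddCommGroup H] [InnerProductSpace ℂ H] [CompleteSpace H]
    (T1 T2 : H →L[ℂ] H) (h1 : ‖T1‖ ≤ 1) (h2 : ‖T2‖ ≤ 1)
    (hc : T1 ∘L T2 = T2 ∘L T1)
    (Q : H →L[ℂ] H) (hQpos : Q.IsPositive)
    (hQsq : ∀ h : H,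
      Filter.Tendsto
        (fun n : ℕ => (((T1 ∘L T2) ^ n) ∘L ((adjoint (T1 ∘L T2)) ^ n)) h)
        Filter.atTop (nhds ((Q ∘L Q) h))) :
    ∃ (K : Type u) (_ : NormedAddCommGroup K) (_ : InnerProductSpace ℂ K)
      (_ : CompleteSpace K)
      (Pi : H →L[ℂ] K) (W1 W2 : K →L[ℂ] K),
      (∀ h, ‖Pi h‖ = ‖Q h‖) ∧
      adjoint W1 ∘L W1 = 1 ∧ W1 ∘L adjoint W1 = 1 ∧
      adjoint W2 ∘L W2 = 1 ∧ W2 ∘L adjoint W2 = 1 ∧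
      W1 ∘L W2 = W2 ∘L W1 ∧
      adjoint W1 ∘L Pi = Pi ∘L adjoint T1 ∧
      adjoint W2 ∘L Pi = Pi ∘L adjoint T2 ∧
      adjoint (W1 ∘L W2) ∘L Pi = Pi ∘L adjoint (T1 ∘L T2) ∧
      Dense (↑(Submodule.span ℂ
        (⋃ n : ℕ, ⇑((W1 ∘L W2) ^ n) '' Set.range ⇑Pi)) : Set K) := by
  have hlim := tendsto_norm_adjoint_pow (T1 ∘L T2) Q hQpos hQsq
  have hX : adjoint (T1 ∘L T2) = adjoint T2 * adjoint T1 := adjoint_comp T1 T2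
  have hcomm : adjoint T2 * adjoint T1 = adjoint T1 * adjoint T2 := by
    rw [← hX, hc]
    exact adjoint_comp T2 T1
  set X := adjoint (T1 ∘L T2) with hXdef
  have hshift : ∀ h, ‖Q (X h)‖ = ‖Q h‖ := by
    intro h
    refine tendsto_nhds_unique (hlim (X h)) ?_
    refine ((hlim h).comp (tendsto_add_atTop_nat 1)).congr fun n => ?_
    simp only [Function.comp, pow_succ, clm_mul_apply]
  have hle : ∀ Y : H →L[ℂ] H, ‖Y‖ ≤ 1 → Commute Y X → ∀ h, ‖Q (Y h)‖ ≤ ‖Q h‖ := by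
    intro Y hY hYX h
    refine le_of_tendsto_of_tendsto' (hlim (Y h)) (hlim h) fun n => ?_
    have : (X ^ n) (Y h) = Y ((X ^ n) h) :=
      congrArg (fun Z : H →L[ℂ] H => Z h) (hYX.pow_right n).eq.symm
    rw [this]
    exact Y.le_of_opNorm_le_of_le hY le_rfl |>.trans_eq (one_mul _)
  have n1 : ‖adjoint T1‖ ≤ 1 := by rwa [LinearIsometryEquiv.norm_map]
  have n2 : ‖adjoint T2‖ ≤ 1 := by rwa [LinearIsometryEquiv.norm_map]
  have k12 : Commute (adjoint T1) (adjoint T2) := hcomm.symm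
  have k1 : Commute (adjoint T1) X := by
    rw [hX]; exact k12.mul_right (Commute.refl _)
  have k2 : Commute (adjoint T2) X := by
    rw [hX]; exact (Commute.refl _).mul_right k12.symm
  have hXa : ∀ h, X h = adjoint T2 (adjoint T1 h) := fun h => by rw [hX]; rfl
  have hXb : ∀ h, X h = adjoint T1 (adjoint T2 h) := fun h => by rw [hX, hcomm]; rfl
  -- `‖Q h‖ = ‖Q X h‖ ≤ ‖Q Xᵢ h‖ ≤ ‖Q h‖`, since `X` factors through each `Xᵢ`.
  have e1 : ∀ h, ‖Q (adjoint T1 h)‖ = ‖Q h‖ := fun h =>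
    le_antisymm (hle _ n1 k1 h) (by rw [← hshift h, hXa]; exact hle _ n2 k2 _)
  have e2 : ∀ h, ‖Q (adjoint T2 h)‖ = ‖Q h‖ := fun h =>
    le_antisymm (hle _ n2 k2 h) (by rw [← hshift h, hXb]; exact hle _ n1 k1 _)
  rw [hX]
  exact exists_unitaries_of_seminorm_preserving (adjoint T1) (adjoint T2) Q
    (fun h => by rw [← hXa, ← hXb]) e1 e2
end

section
/- Let (T1, T2) be a pair of commuting contractions on a complex Hilbert space H, let K be a complex Hilbert space, and let Π : H → K be a bounded operator. Suppose (W1, W2) and (W1', W2') are two pairs of commuting unitary operators on K such that W1 W2 = W1' W2', Wj* Π = Π Tj* and Wj'* Π = Π Tj* for j = 1, 2, and the linear span of ⋃_{n≥0} (W1 W2)ⁿ (range Π) is dense in K. Then W1 = W1' and W2 = W2'. (Uniqueness of the canonical pair of commuting unitaries.) -/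
/-!
Put `W = W1 W2 = W1' W2'`. Each of the four unitaries commutes with `W`, and therefore so does its
adjoint. Hence `Wj* Wⁿ Π = Wⁿ Wj* Π = Wⁿ Π Tj* = Wⁿ Wj'* Π = Wj'* Wⁿ Π` for all `n`, so `Wj*` and
`Wj'*` agree on the vectors `Wⁿ Π h`. These span a dense subspace, so the adjoints coincide
(`eq_of_adjoint_comp_eq`).
-/

open ContinuousLinearMap

/-- The adjoint of a unitary, being its inverse, commutes with whatever the unitary commutes with. -/
lemma commute_adjoint_of_unitary {K : Type*}
    [NormedAddCommGroup K] [InnerProductSpace ℂ K] [CompleteSpace K]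
    {A W : K →L[ℂ] K} (hA : adjoint A ∘L A = 1) (hA' : A ∘L adjoint A = 1)
    (hAW : Commute A W) : Commute (adjoint A) W :=
  Commute.units_inv_left (u := ⟨A, adjoint A, hA', hA⟩) hAW

/-- Two operators whose adjoints commute with `W` and agree on the range of `Pi` are equal, as soon
as the translates of that range under the powers of `W` span a dense subspace. -/
lemma eq_of_adjoint_comp_eq {H K : Type*}
    [NormedAddCommGroup H] [InnerProductSpace ℂ H]
    [NormedAddCommGroup K] [InnerProductSpace ℂ K] [CompleteSpace K]
    {Pi : H →L[ℂ] K} {A B W : K →L[ℂ] K}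
    (hA : Commute (adjoint A) W) (hB : Commute (adjoint B) W)
    (hAB : adjoint A ∘L Pi = adjoint B ∘L Pi)
    (hdense : Dense (↑(Submodule.span ℂ
      (⋃ n : ℕ, ⇑(W ^ n) '' Set.range ⇑Pi)) : Set K)) :
    A = B := by
  apply (adjoint : (K →L[ℂ] K) ≃ₗᵢ⋆[ℂ] (K →L[ℂ] K)).injective
  refine ContinuousLinearMap.ext_on hdense ?_
  intro x hx
  obtain ⟨n, _, ⟨h, rfl⟩, rfl⟩ := Set.mem_iUnion.mp hx
  have eA := DFunLike.congr_fun (hA.pow_right n).eq (Pi h)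
  have eB := DFunLike.congr_fun (hB.pow_right n).eq (Pi h)
  have e := DFunLike.congr_fun hAB h
  simp only [mul_apply_eq_comp, comp_apply] at eA eB e
  rw [eA, eB, e]

theorem stmt_8 {H K : Type*}
    [NormedAddCommGroup H] [InnerProductSpace ℂ H] [CompleteSpace H]
    [NormedAddCommGroup K] [InnerProductSpace ℂ K] [CompleteSpace K]
    (T1 T2 : H →L[ℂ] H) (h1 : ‖T1‖ ≤ 1) (h2 : ‖T2‖ ≤ 1)
    (hc : T1 ∘L T2 = T2 ∘L T1)
    (Pi : H →L[ℂ] K) (W1 W2 W1' W2' : K →L[ℂ] K)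
    (hW1 : adjoint W1 ∘L W1 = 1) (hW1' : W1 ∘L adjoint W1 = 1)
    (hW2 : adjoint W2 ∘L W2 = 1) (hW2' : W2 ∘L adjoint W2 = 1)
    (hV1 : adjoint W1' ∘L W1' = 1) (hV1' : W1' ∘L adjoint W1' = 1)
    (hV2 : adjoint W2' ∘L W2' = 1) (hV2' : W2' ∘L adjoint W2' = 1)
    (hcW : W1 ∘L W2 = W2 ∘L W1) (hcW' : W1' ∘L W2' = W2' ∘L W1')
    (hprod : W1 ∘L W2 = W1' ∘L W2')
    (hl1 : adjoint W1 ∘L Pi = Pi ∘L adjoint T1)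
    (hl2 : adjoint W2 ∘L Pi = Pi ∘L adjoint T2)
    (hl1' : adjoint W1' ∘L Pi = Pi ∘L adjoint T1)
    (hl2' : adjoint W2' ∘L Pi = Pi ∘L adjoint T2)
    (hdense : Dense (↑(Submodule.span ℂ
      (⋃ n : ℕ, ⇑((W1 ∘L W2) ^ n) '' Set.range ⇑Pi)) : Set K)) :
    W1 = W1' ∧ W2 = W2' := by
  have c1 : Commute W1 (W1 ∘L W2) := (Commute.refl W1).mul_right hcW
  have c2 : Commute W2 (W1 ∘L W2) := (Commute.symm hcW).mul_right (Commute.refl W2)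
  have c1' : Commute W1' (W1 ∘L W2) := hprod ▸ (Commute.refl W1').mul_right hcW'
  have c2' : Commute W2' (W1 ∘L W2) :=
    hprod ▸ (Commute.symm hcW').mul_right (Commute.refl W2')
  exact ⟨eq_of_adjoint_comp_eq (commute_adjoint_of_unitary hW1 hW1' c1)
      (commute_adjoint_of_unitary hV1 hV1' c1') (hl1.trans hl1'.symm) hdense,
    eq_of_adjoint_comp_eq (commute_adjoint_of_unitary hW2 hW2' c2)
      (commute_adjoint_of_unitary hV2 hV2' c2') (hl2.trans hl2'.symm) hdense⟩
end

section
/- Let (T1, T2) be a pair of commuting contractions on a complex Hilbert space H and set T = T1 T2. Then there exist a complex Hilbert space F, an orthogonal projection P and a unitary operator U on F, and a bounded operator V : H → F satisfying ‖V h‖ = ‖D_{T*} h‖ for all h ∈ H, such that (I − P) U V + P U V T* = V T1* and U* P V + U* (I − P) V T* = V T2*. (Existence of Type I Andô tuples: every special Andô tuple for (T1*, T2*) solves these equations, so in particular solutions exist.) -/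
/-!
Write `A₁ = T₁*`, `A₂ = T₂*`, `A = A₁ A₂ = A₂ A₁ = T*`, and let `E₁`, `E₂` be operators with
`‖Eᵢ h‖² = ‖h‖² - ‖Aᵢ h‖²` (square roots of the defects `1 - Aᵢ* Aᵢ`, `exists_defect`). The two maps
`h ↦ (E₁ A₂ h, E₂ h)` and `h ↦ (E₁ h, E₂ A₁ h)` into `G = H ⊕ H` satisfy
`‖E₁ A₂ h‖² + ‖E₂ h‖² = ‖h‖² - ‖A h‖² = ‖E₁ h‖² + ‖E₂ A₁ h‖²`, so a partial isometry `C` of `G`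
carries the first to the second (`exists_partialIsometry`). On `F = G ⊕ G` its Halmos dilation is a
unitary `U` still carrying `((E₁ A₂ h, E₂ h), 0)` to `((E₁ h, E₂ A₁ h), 0)`
(`exists_unitary_extension`). With `V h = ((E₁ A₂ h, E₂ h), 0)` and `P` the projection of `F` onto
its very first summand `H`, both required equations are coordinatewise identities; the second one is
first multiplied by `U`.
-/

open ContinuousLinearMap

universe u

/-- The operator `x ↦ (f x, g x)` into the Hilbert space direct sum. -/
noncomputable def l2pair {X A B : Type u} [NormedAddCommGroup X] [InnerProductSpace ℂ X]
    [NormedAddCommGroup A] [InnerProductSpace ℂ A] [NormedAddCommGroup B] [InnerProductSpace ℂ B]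
    (f : X →L[ℂ] A) (g : X →L[ℂ] B) : X →L[ℂ] WithLp 2 (A × B) :=
  (WithLp.prodContinuousLinearEquiv 2 ℂ A B).symm.toContinuousLinearMap ∘L f.prod g

theorem l2pair_apply {X A B : Type u} [NormedAddCommGroup X] [InnerProductSpace ℂ X]
    [NormedAddCommGroup A] [InnerProductSpace ℂ A] [NormedAddCommGroup B] [InnerProductSpace ℂ B]
    (f : X →L[ℂ] A) (g : X →L[ℂ] B) (x : X) : l2pair f g x = WithLp.toLp 2 (f x, g x) := rfl

theorem inner_self_ofReal {H : Type u} [NormedAddCommGroup H] [InnerProductSpace ℂ H] (x : H) :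
    inner ℂ x x = ((‖x‖ ^ 2 : ℝ) : ℂ) := by
  rw [inner_self_eq_norm_sq_to_K]
  push_cast
  rfl

theorem exists_defect {H : Type u} [NormedAddCommGroup H] [InnerProductSpace ℂ H] [CompleteSpace H]
    (A : H →L[ℂ] H) (hA : ‖A‖ ≤ 1) :
    ∃ E : H →L[ℂ] H, ∀ h, ‖E h‖ ^ 2 = ‖h‖ ^ 2 - ‖A h‖ ^ 2 := by
  have hin : ∀ x, inner ℂ ((1 - adjoint A ∘L A : H →L[ℂ] H) x) x
      = ((‖x‖ ^ 2 - ‖A x‖ ^ 2 : ℝ) : ℂ) := by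
    intro x
    rw [sub_apply, comp_apply, one_apply_eq_self, inner_sub_left, adjoint_inner_left,
      inner_self_ofReal, inner_self_ofReal, Complex.ofReal_sub]
  have hpos : (0 : H →L[ℂ] H) ≤ 1 - adjoint A ∘L A := by
    rw [nonneg_iff_isPositive, isPositive_iff_complex]
    intro x
    rw [hin, RCLike.re_eq_complex_re, Complex.ofReal_re]
    refine ⟨rfl, ?_⟩
    have : ‖A x‖ ≤ ‖x‖ := by simpa using A.le_of_opNorm_le hA x
    have := pow_le_pow_left₀ (norm_nonneg _) this 2
    linarith
  refine ⟨CFC.sqrt (1 - adjoint A ∘L A), fun h => ?_⟩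
  have hs : (CFC.sqrt (1 - adjoint A ∘L A)).IsPositive :=
    (nonneg_iff_isPositive _).1 (CFC.sqrt_nonneg _)
  have hsq := CFC.sqrt_mul_sqrt_self (1 - adjoint A ∘L A) hpos
  have h3 := hin h
  rw [← hsq, mul_apply_eq_comp, hs.isSymmetric.apply_clm, inner_self_ofReal] at h3
  exact Complex.ofReal_injective h3

/-- Two operators with the same norm on every vector differ by a partial isometry `C`, whose initial
space is the closure of the range of `V`. -/
theorem exists_partialIsometry {H G : Type u} [NormedAddCommGroup H] [InnerProductSpace ℂ H]
    [NormedAddCommGroup G] [InnerProductSpace ℂ G] [CompleteSpace G]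
    (V W : H →L[ℂ] G) (hVW : ∀ h, ‖V h‖ = ‖W h‖) :
    ∃ C : G →L[ℂ] G, (∀ h, C (V h) = W h) ∧ (∀ h, adjoint C (C (V h)) = V h) ∧
      (∀ x, C (adjoint C (C x)) = C x) := by
  let M : Submodule ℂ G := V.range.topologicalClosure
  have hM : IsClosed (M : Set G) := Submodule.isClosed_topologicalClosure _
  have : CompleteSpace M := hM.completeSpace_coe
  have hmem : ∀ h, V h ∈ M := fun h => Submodule.le_topologicalClosure _ ⟨h, rfl⟩
  let e : H →ₗ[ℂ] M := V.toLinearMap.codRestrict M hmem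
  have he : ∀ h, ((e h : M) : G) = V h := fun _ => rfl
  have hd : DenseRange e := by
    intro x
    rw [Topology.IsEmbedding.subtypeVal.closure_eq_preimage_closure_image]
    have hx : (x : G) ∈ closure (V.range : Set G) := x.2
    refine closure_mono ?_ hx
    rintro _ ⟨h, rfl⟩
    exact ⟨e h, ⟨h, rfl⟩, rfl⟩
  let L : M →L[ℂ] G := W.toLinearMap.extendOfNorm e
  have hL : ∀ h, L (e h) = W h :=
    LinearMap.extendOfNorm_eq hd ⟨1, fun h => by
      rw [one_mul]; exact (hVW h).ge⟩
  have hn : ∀ x, ‖L x‖ = ‖x‖ := by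
    refine hd.induction ?_ (isClosed_eq (by fun_prop) (by fun_prop))
    rintro _ ⟨h, rfl⟩
    rw [hL, ← hVW]; rfl
  have hLL : ∀ x, adjoint L (L x) = x := fun x =>
    DFunLike.congr_fun ((norm_map_iff_adjoint_comp_self L).1 hn) x
  have hadj : adjoint (L ∘L M.orthogonalProjectionOnto) = M.subtypeL ∘L adjoint L := by
    rw [adjoint_comp, Submodule.adjoint_orthogonalProjectionOnto]
  have hproj : ∀ y : M, M.orthogonalProjectionOnto (y : G) = y := by
    intro y; simp
  refine ⟨L ∘L M.orthogonalProjectionOnto, fun h => ?_, fun h => ?_, fun x => ?_⟩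
  · rw [← he, comp_apply, hproj, hL]
  · rw [hadj, ← he]
    simp only [comp_apply, hproj, hLL, Submodule.subtypeL_apply]
  · rw [hadj]
    simp only [comp_apply, hLL, Submodule.subtypeL_apply, hproj]

/-- The unitary is the Halmos dilation `[[C, 1 - C C*], [1 - C* C, C*]]` of a partial isometry `C`
with `C V = W`. -/
theorem exists_unitary_extension {H G : Type u} [NormedAddCommGroup H] [InnerProductSpace ℂ H]
    [NormedAddCommGroup G] [InnerProductSpace ℂ G] [CompleteSpace G]
    (V W : H →L[ℂ] G) (hVW : ∀ h, ‖V h‖ = ‖W h‖) :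
    ∃ U : WithLp 2 (G × G) →L[ℂ] WithLp 2 (G × G), adjoint U ∘L U = 1 ∧ U ∘L adjoint U = 1 ∧
      ∀ h, U (WithLp.toLp 2 (V h, 0)) = WithLp.toLp 2 (W h, 0) := by
  obtain ⟨C, hCV, hCCV, hC⟩ := exists_partialIsometry V W hVW
  have hC' : ∀ x, adjoint C (C (adjoint C x)) = adjoint C x := by
    have h : C ∘L adjoint C ∘L C = C := by ext x; exact hC x
    have h' := congrArg adjoint h
    simp only [adjoint_comp, adjoint_adjoint] at h'
    exact fun x => DFunLike.congr_fun h' x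
  let p : WithLp 2 (G × G) →L[ℂ] G := WithLp.fstL 2 ℂ G G
  let q : WithLp 2 (G × G) →L[ℂ] G := WithLp.sndL 2 ℂ G G
  let U : WithLp 2 (G × G) →L[ℂ] WithLp 2 (G × G) :=
    l2pair (C ∘L p + (q - C ∘L adjoint C ∘L q)) ((p - adjoint C ∘L C ∘L p) + adjoint C ∘L q)
  let U' : WithLp 2 (G × G) →L[ℂ] WithLp 2 (G × G) :=
    l2pair (adjoint C ∘L p + (q - adjoint C ∘L C ∘L q)) ((p - C ∘L adjoint C ∘L p) + C ∘L q)
  have hU : ∀ a b, U (WithLp.toLp 2 (a, b)) = WithLp.toLp 2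
      (C a + (b - C (adjoint C b)), (a - adjoint C (C a)) + adjoint C b) := fun _ _ => rfl
  have hU' : ∀ a b, U' (WithLp.toLp 2 (a, b)) = WithLp.toLp 2
      (adjoint C a + (b - adjoint C (C b)), (a - C (adjoint C a)) + C b) := fun _ _ => rfl
  have hsa : ∀ x y, inner ℂ (C (adjoint C x)) y = inner ℂ x (C (adjoint C y)) := fun x y => by
    rw [← adjoint_inner_right, adjoint_inner_left]
  have hadj : adjoint U = U' := by
    symm
    rw [eq_adjoint_iff]
    rintro ⟨a, b⟩ ⟨c, d⟩
    rw [hU, hU']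
    simp only [WithLp.prod_inner_apply, inner_add_left, inner_add_right, inner_sub_left,
      inner_sub_right, adjoint_inner_left, adjoint_inner_right, hsa]
    ring
  refine ⟨U, ?_, ?_, fun h => ?_⟩
  · rw [hadj]
    ext1 ⟨a, b⟩
    rw [comp_apply, hU, hU', one_apply_eq_self]
    simp only [map_add, map_sub, hC, hC']
    congr 2 <;> abel
  · rw [hadj]
    ext1 ⟨a, b⟩
    rw [comp_apply, hU', hU, one_apply_eq_self]
    simp only [map_add, map_sub, hC, hC']
    congr 2 <;> abel
  · rw [hU, hCV, ← hCV, hCCV]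
    simp

theorem stmt_9 {H : Type u} [NormedAddCommGroup H] [InnerProductSpace ℂ H] [CompleteSpace H]
    (T1 T2 : H →L[ℂ] H) (h1 : ‖T1‖ ≤ 1) (h2 : ‖T2‖ ≤ 1)
    (hc : T1 ∘L T2 = T2 ∘L T1)
    (D : H →L[ℂ] H) (hDpos : D.IsPositive)
    (hDsq : D ∘L D = 1 - (T1 ∘L T2) ∘L adjoint (T1 ∘L T2)) :
    ∃ (F : Type u) (_ : NormedAddCommGroup F) (_ : InnerProductSpace ℂ F)
      (_ : CompleteSpace F)
      (P U : F →L[ℂ] F) (V : H →L[ℂ] F),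
      adjoint P = P ∧ P ∘L P = P ∧
      adjoint U ∘L U = 1 ∧ U ∘L adjoint U = 1 ∧
      (∀ h, ‖V h‖ = ‖D h‖) ∧
      (1 - P) ∘L U ∘L V + P ∘L U ∘L (V ∘L adjoint (T1 ∘L T2)) = V ∘L adjoint T1 ∧
      adjoint U ∘L P ∘L V + adjoint U ∘L (1 - P) ∘L (V ∘L adjoint (T1 ∘L T2))
        = V ∘L adjoint T2 := by
  have hD : ∀ h, ‖D h‖ ^ 2 = ‖h‖ ^ 2 - ‖adjoint (T1 ∘L T2) h‖ ^ 2 := by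
    intro h
    have h3 : inner ℂ ((D ∘L D) h) h
        = ((‖h‖ ^ 2 - ‖adjoint (T1 ∘L T2) h‖ ^ 2 : ℝ) : ℂ) := by
      rw [hDsq, sub_apply, comp_apply, one_apply_eq_self, inner_sub_left, ← adjoint_inner_right,
        inner_self_ofReal, inner_self_ofReal, Complex.ofReal_sub]
    rw [comp_apply, hDpos.isSymmetric.apply_clm, inner_self_ofReal] at h3
    exact Complex.ofReal_injective h3
  have hA : ∀ h, adjoint (T1 ∘L T2) h = adjoint T2 (adjoint T1 h) := fun h => by
    rw [adjoint_comp, comp_apply]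
  have hA' : ∀ h, adjoint T2 (adjoint T1 h) = adjoint T1 (adjoint T2 h) := fun h => by
    rw [← hA, hc, adjoint_comp, comp_apply]
  obtain ⟨E1, hE1⟩ := exists_defect (adjoint T1) (by simpa using h1)
  obtain ⟨E2, hE2⟩ := exists_defect (adjoint T2) (by simpa using h2)
  let V0 : H →L[ℂ] WithLp 2 (H × H) := l2pair (E1 ∘L adjoint T2) E2
  let W0 : H →L[ℂ] WithLp 2 (H × H) := l2pair E1 (E2 ∘L adjoint T1)
  have hV0n : ∀ h, ‖V0 h‖ = ‖D h‖ := fun h => by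
    rw [← sq_eq_sq₀ (norm_nonneg _) (norm_nonneg _), WithLp.prod_norm_sq_eq_of_L2, hD, hA, hA']
    change ‖E1 (adjoint T2 h)‖ ^ 2 + ‖E2 h‖ ^ 2 = _
    rw [hE1, hE2]
    ring
  have hW0n : ∀ h, ‖W0 h‖ = ‖D h‖ := fun h => by
    rw [← sq_eq_sq₀ (norm_nonneg _) (norm_nonneg _), WithLp.prod_norm_sq_eq_of_L2, hD, hA]
    change ‖E1 h‖ ^ 2 + ‖E2 (adjoint T1 h)‖ ^ 2 = _
    rw [hE1, hE2]
    ring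
  obtain ⟨U, hU1, hU2, hUV⟩ :=
    exists_unitary_extension V0 W0 (fun h => (hV0n h).trans (hW0n h).symm)
  let V : H →L[ℂ] WithLp 2 (WithLp 2 (H × H) × WithLp 2 (H × H)) := l2pair V0 0
  let P : WithLp 2 (WithLp 2 (H × H) × WithLp 2 (H × H)) →L[ℂ]
      WithLp 2 (WithLp 2 (H × H) × WithLp 2 (H × H)) :=
    l2pair (l2pair (WithLp.fstL 2 ℂ H H ∘L WithLp.fstL 2 ℂ _ _) 0) 0
  have hV : ∀ h, V h = WithLp.toLp 2 (WithLp.toLp 2 (E1 (adjoint T2 h), E2 h), 0) := fun _ => rfl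
  have hUV' : ∀ h, U (V h) = WithLp.toLp 2 (WithLp.toLp 2 (E1 h, E2 (adjoint T1 h)), 0) := hUV
  have hP : ∀ a b c, P (WithLp.toLp 2 (WithLp.toLp 2 (a, b), c))
      = WithLp.toLp 2 (WithLp.toLp 2 (a, 0), 0) := fun _ _ _ => rfl
  refine ⟨WithLp 2 (WithLp 2 (H × H) × WithLp 2 (H × H)), inferInstance, inferInstance,
    inferInstance, P, U, V, ?_, ?_, hU1, hU2, ?_, ?_, ?_⟩
  · symm
    rw [eq_adjoint_iff]
    rintro ⟨⟨a, b⟩, c⟩ ⟨⟨a', b'⟩, c'⟩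
    rw [hP, hP]
    simp [WithLp.prod_inner_apply]
  · ext1 ⟨⟨a, b⟩, c⟩
    rw [comp_apply, hP, hP]
  · intro h
    rw [← hV0n, ← sq_eq_sq₀ (norm_nonneg _) (norm_nonneg _), WithLp.prod_norm_sq_eq_of_L2]
    change ‖V0 h‖ ^ 2 + ‖(0 : WithLp 2 (H × H))‖ ^ 2 = _
    simp
  · ext1 h
    simp only [add_apply, comp_apply, sub_apply, one_apply_eq_self, hUV', hP, hA]
    simp only [hV, hA', ← WithLp.toLp_add, ← WithLp.toLp_sub, Prod.mk_add_mk, Prod.mk_sub_mk]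
    simp
  -- Since `U* U = 1`, it suffices to compare `P V + (1 - P) V T*` with `U V T₂*`.
  · have key : P ∘L V + (1 - P) ∘L (V ∘L adjoint (T1 ∘L T2)) = U ∘L V ∘L adjoint T2 := by
      ext1 h
      simp only [add_apply, comp_apply, sub_apply, one_apply_eq_self, hUV', hA, hA']
      simp only [hV, hP, hA', ← WithLp.toLp_add, ← WithLp.toLp_sub, Prod.mk_add_mk, Prod.mk_sub_mk]
      simp
    rw [← comp_add, key, ← comp_assoc, hU1]
    rfl
end

section
/- Let (V1, V2) be a pair of commuting isometries on a complex Hilbert space H. Then the adjoint pair (V1*, V2*) has the double regular-factorization property: both factorizations of (V1V2)* as V1*·V2* and as V2*·V1* are regular, i.e. the set {D_{V1*} V2* h ⊕ D_{V2*} h : h ∈ H} is dense in 𝒟_{V1*} ⊕ 𝒟_{V2*} and the set {D_{V2*} V1* h ⊕ D_{V1*} h : h ∈ H} is dense in 𝒟_{V2*} ⊕ 𝒟_{V1*}. -/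
/-!
Write `Pᵢ = 1 - Vᵢ Vᵢ*`. Since `Vᵢ* Vᵢ = 1`, `Pᵢ` is idempotent with `Pᵢ Vᵢ = 0` and `Vᵢ* Pᵢ = 0`.
For any `a`, `b` the vector `h = V₂ P₁ a + P₂ b` therefore satisfies `P₁ V₂* h = P₁ a` and
`P₂ h = P₂ b`, so the set in question is already equal to `range P₁ × range P₂` before taking
closures (`range_defect_pair`). The second factorization follows by exchanging `V₁` and `V₂`.
-/

open ContinuousLinearMap

/-- The regularity map of the factorization `V* · W*` is onto `range (1 - V V*) × range (1 - W W*)`.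
No closure is needed: `W (1 - V V*) a + (1 - W W*) b` is an explicit preimage. -/
theorem range_defect_pair {H : Type*}
    [NormedAddCommGroup H] [InnerProductSpace ℂ H] [CompleteSpace H]
    (V W : H →L[ℂ] H) (hV : adjoint V ∘L V = 1) (hW : adjoint W ∘L W = 1) :
    (Set.range fun h : H =>
        ((1 - V ∘L adjoint V) (adjoint W h), (1 - W ∘L adjoint W) h)) =
      Set.range ⇑(1 - V ∘L adjoint V) ×ˢ Set.range ⇑(1 - W ∘L adjoint W) := by
  have eV : ∀ x, adjoint V (V x) = x := fun x => by simpa using DFunLike.congr_fun hV x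
  have eW : ∀ x, adjoint W (W x) = x := fun x => by simpa using DFunLike.congr_fun hW x
  ext ⟨x, y⟩
  constructor
  · rintro ⟨h, hh⟩
    obtain ⟨rfl, rfl⟩ := Prod.mk.inj hh
    exact ⟨⟨_, rfl⟩, ⟨_, rfl⟩⟩
  · rintro ⟨⟨a, rfl⟩, ⟨b, rfl⟩⟩
    refine ⟨W ((1 - V ∘L adjoint V) a) + (1 - W ∘L adjoint W) b, ?_⟩
    simp [eV, eW]

theorem stmt_16 {H : Type*}
    [NormedAddCommGroup H] [InnerProductSpace ℂ H] [CompleteSpace H]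
    (V1 V2 : H →L[ℂ] H)
    (h1 : adjoint V1 ∘L V1 = 1) (h2 : adjoint V2 ∘L V2 = 1)
    (hc : V1 ∘L V2 = V2 ∘L V1) :
    closure (Set.range fun h : H =>
        ((1 - V1 ∘L adjoint V1) (adjoint V2 h), (1 - V2 ∘L adjoint V2) h)) =
      closure (Set.range ⇑(1 - V1 ∘L adjoint V1)) ×ˢ
        closure (Set.range ⇑(1 - V2 ∘L adjoint V2)) ∧
    closure (Set.range fun h : H =>
        ((1 - V2 ∘L adjoint V2) (adjoint V1 h), (1 - V1 ∘L adjoint V1) h)) =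
      closure (Set.range ⇑(1 - V2 ∘L adjoint V2)) ×ˢ
        closure (Set.range ⇑(1 - V1 ∘L adjoint V1)) := by
  rw [range_defect_pair V1 V2 h1 h2, range_defect_pair V2 V1 h2 h1]
  exact ⟨closure_prod_eq, closure_prod_eq⟩
end
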